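/- arXiv:1003.2338 — 4 statements merged into one kernel-verified Lean document; each statement's English description precedes it below -/
import Mathlib

section
/- If Φ : Mₙ(ℂ) → M_d(ℂ) is a unital positive linear map and A is a positive semidefinite matrix, then for exponents 0 ≤ p ≤ q one has |Φ(A^p)Φ(A^q)| ≤ Φ(A^{p+q}), where |X| = (X*X)^{1/2} denotes the matrix absolute value. -/
open scoped Matrix ComplexOrder

/-- `A^p` for a matrix, via continuous functional calculus with the real power function. -/
noncomputable def mpow {n : ℕ} (A : Matrix (Fin n) (Fin n) ℂ) (p : ℝ) : Matrix (Fin n) (Fin n) ℂ :=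
  cfc (fun x : ℝ => x ^ p) A

/-- Matrix absolute value `|X| = (XᴴX)^{1/2}`. -/
noncomputable def matAbs {n : ℕ} (X : Matrix (Fin n) (Fin n) ℂ) : Matrix (Fin n) (Fin n) ℂ :=
  cfc Real.sqrt (Xᴴ * X)

/-- Loewner order: `X ≤ Y` iff `Y - X` is positive semidefinite. -/
def loewnerLE {n : ℕ} (X Y : Matrix (Fin n) (Fin n) ℂ) : Prop := (Y - X).PosSemidef

/-!
For positive invertible `a`, put `P = Φ (a ^ p)` and `Q = Φ (a ^ q)`. Jensen's inequality for the
operator concave power `p / q` gives `P ≤ Q ^ (p / q)`. Furuta's inequality, in contrast to the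
mere monotonicity of powers, survives multiplication by `Q` and yields `|P * Q| ≤ Q ^ (1 + p / q)`.
Jensen's inequality for the operator convex power `1 + p / q ∈ [1, 2]` then bounds the right-hand
side by `Φ (a ^ (p + q))`. General `a` are reached as limits of `a + ε`.

Both Jensen inequalities rest on Kadison's inequality `Φ a ^ 2 ≤ Φ (a ^ 2)`, which here is the
nonnegativity of a variance: applying `Φ` to the Bernstein polynomials of `a` gives positive
weights with sum `1`, mean `Φ a`, and second moment close to `Φ (a ^ 2)`. Conjugation turns it into
`Φ b * Φ c ^ (-1) * Φ b ≤ Φ (b * c ^ (-1) * b)`, by which the set of `p` with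
`Φ (a ^ p) ≤ Φ a ^ p` is closed under midpoints; being closed and containing `0` and `1`, it
contains `[0, 1]`.
-/

open Filter Topology NNReal

namespace AsymmetricKadison

section Powers

variable {A : Type*} [CStarAlgebra A] [PartialOrder A] [StarOrderedRing A]

lemma isSelfAdjoint_rpow (a : A) (t : ℝ) : IsSelfAdjoint (a ^ t) :=
  .of_nonneg CFC.rpow_nonneg

lemma rpow_rpow_of_isStrictlyPositive {a : A} (ha : IsStrictlyPositive a) (s t : ℝ) :
    (a ^ s) ^ t = a ^ (s * t) := by
  rcases eq_or_ne s 0 with rfl | hs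
  · rw [CFC.rpow_zero a ha.nonneg, CFC.one_rpow, zero_mul, CFC.rpow_zero a ha.nonneg]
  · exact CFC.rpow_rpow a s t hs ha

lemma rpow_mul_rpow_mul_rpow {a : A} (ha : IsStrictlyPositive a) (s t u : ℝ) :
    a ^ s * a ^ t * a ^ u = a ^ (s + t + u) := by
  rw [CFC.rpow_add ha.isUnit, CFC.rpow_add ha.isUnit]

lemma rpow_two {a : A} (ha : 0 ≤ a) : a ^ (2 : ℝ) = a * a := by
  rw [← sq]
  exact_mod_cast CFC.rpow_natCast a 2 ha

lemma rpow_neg_conjugate_rpow_conjugate {a : A} (ha : IsStrictlyPositive a) (t : ℝ) (x : A) :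
    a ^ (-t) * (a ^ t * x * a ^ t) * a ^ (-t) = x := by
  calc a ^ (-t) * (a ^ t * x * a ^ t) * a ^ (-t)
      = (a ^ (-t) * a ^ t) * x * (a ^ t * a ^ (-t)) := by simp only [mul_assoc]
    _ = x := by
      rw [CFC.rpow_neg_mul_rpow t ha, CFC.rpow_mul_rpow_neg t ha, one_mul, mul_one]

lemma rpow_conjugate_le_rpow_conjugate_iff {a : A} (ha : IsStrictlyPositive a) (t : ℝ) {x y : A} :
    a ^ t * x * a ^ t ≤ a ^ t * y * a ^ t ↔ x ≤ y := by
  refine ⟨fun h ↦ ?_, fun h ↦ conjugate_le_conjugate_of_nonneg h CFC.rpow_nonneg⟩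
  simpa only [rpow_neg_conjugate_rpow_conjugate ha] using
    conjugate_le_conjugate_of_nonneg h (CFC.rpow_nonneg (a := a) (y := -t))

lemma rpow_neg_le_rpow_neg {a b : A} (ha : IsStrictlyPositive a) (hab : a ≤ b) {t : ℝ}
    (ht : t ∈ Set.Icc (0 : ℝ) 1) : b ^ (-t) ≤ a ^ (-t) := by
  have hinv := CStarAlgebra.rpow_neg_one_le_rpow_neg_one (CFC.rpow_le_rpow ht hab) (.rpow a t ha)
  simpa [rpow_rpow_of_isStrictlyPositive, ha, ha.of_le hab] using hinv

lemma le_of_mul_self_le_mul_self {a b : A} (ha : 0 ≤ a) (hb : 0 ≤ b) (h : a * a ≤ b * b) :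
    a ≤ b := by
  simpa only [CFC.sqrt_mul_self a, CFC.sqrt_mul_self b] using CFC.sqrt_le_sqrt (a * a) (b * b) h

lemma continuous_rpow_exponent {a : A} (ha : IsStrictlyPositive a) :
    Continuous fun t : ℝ ↦ a ^ t := by
  simp_rw [CFC.rpow_eq_cfc_real ha.nonneg]
  have hjoint : ContinuousOn (Function.uncurry fun t x : ℝ ↦ x ^ t) (Set.univ ×ˢ spectrum ℝ a) :=
    fun tx htx ↦ (continuousAt_snd.rpow continuousAt_fst
      (.inl (ha.spectrum_pos htx.2).ne')).continuousWithinAt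
  have hspec : IsCompact (spectrum ℝ a) := ContinuousFunctionalCalculus.isCompact_spectrum a
  refine continuous_iff_continuousAt.mpr fun t ↦ continuousAt_cfc_fun ?_ (.of_forall fun u ↦ ?_)
  · intro U hU
    obtain ⟨V, hV, hVU⟩ :=
      hspec.mem_uniformity_of_prod hjoint (Set.mem_univ t) (symm_le_uniformity hU)
    rw [nhdsWithin_univ] at hV
    filter_upwards [hV] with u hu x hx using hVU u hu x hx
  · exact fun x hx ↦
      (Real.continuousAt_rpow_const x u (.inl (ha.spectrum_pos hx).ne')).continuousWithinAt

lemma rpow_conjugate_mul_self {a : A} (ha : IsStrictlyPositive a) (t : ℝ) (x : A) :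
    (a ^ t * x * a ^ t) * (a ^ t * x * a ^ t) = a ^ t * (x * a ^ (2 * t) * x) * a ^ t := by
  rw [two_mul, CFC.rpow_add ha.isUnit]
  simp only [mul_assoc]

lemma le_rpow_midpoint_of_conjugate_le {b x : A} (hb : IsStrictlyPositive b) (hx : 0 ≤ x) {p q : ℝ}
    (h : x * b ^ (-q) * x ≤ b ^ p) : x ≤ b ^ ((p + q) / 2) := by
  rw [← rpow_conjugate_le_rpow_conjugate_iff hb (-(q / 2)), rpow_mul_rpow_mul_rpow hb]
  refine le_of_mul_self_le_mul_self (conjugate_nonneg_of_nonneg hx CFC.rpow_nonneg)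
    CFC.rpow_nonneg ?_
  calc b ^ (-(q / 2)) * x * b ^ (-(q / 2)) * (b ^ (-(q / 2)) * x * b ^ (-(q / 2)))
      = b ^ (-(q / 2)) * (x * b ^ (-q) * x) * b ^ (-(q / 2)) := by
        rw [rpow_conjugate_mul_self hb, mul_neg, mul_div_cancel₀ q two_ne_zero]
    _ ≤ b ^ (-(q / 2)) * b ^ p * b ^ (-(q / 2)) := by
        rwa [rpow_conjugate_le_rpow_conjugate_iff hb]
    _ = b ^ (-(q / 2) + (p + q) / 2 + -(q / 2)) * b ^ (-(q / 2) + (p + q) / 2 + -(q / 2)) := by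
        rw [rpow_mul_rpow_mul_rpow hb, ← CFC.rpow_add hb.isUnit]; ring_nf

end Powers

section Variance

variable {R : Type*} [Ring R] [PartialOrder R] [StarRing R] [StarOrderedRing R] [Algebra ℝ R]
  [StarModule ℝ R]

lemma sq_sum_smul_le_sum_sq_smul {ι : Type*} {s : Finset ι} {g : ι → R} (hg : ∀ i ∈ s, 0 ≤ g i)
    (hsum : ∑ i ∈ s, g i = 1) (w : ι → ℝ) :
    (∑ i ∈ s, w i • g i) * (∑ i ∈ s, w i • g i) ≤ ∑ i ∈ s, (w i * w i) • g i := by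
  set m := ∑ i ∈ s, w i • g i with hm
  have hm_sa : IsSelfAdjoint m :=
    isSelfAdjoint_sum s fun i hi ↦ (IsSelfAdjoint.all (w i)).smul (.of_nonneg (hg i hi))
  have hdev : 0 ≤ ∑ i ∈ s, (w i • 1 - m) * g i * (w i • 1 - m) :=
    Finset.sum_nonneg fun i hi ↦ IsSelfAdjoint.conjugate_nonneg (hg i hi) <|
      ((IsSelfAdjoint.all (w i)).smul (IsSelfAdjoint.one R)).sub hm_sa
  have hexpand : ∑ i ∈ s, (w i • 1 - m) * g i * (w i • 1 - m)
      = ∑ i ∈ s, (w i * w i) • g i - m * m := by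
    calc ∑ i ∈ s, (w i • 1 - m) * g i * (w i • 1 - m)
        = ∑ i ∈ s, ((w i * w i) • g i - (w i • g i) * m - m * (w i • g i) + m * g i * m) := by
          refine Finset.sum_congr rfl fun i _ ↦ ?_
          simp only [sub_mul, mul_sub, smul_mul_assoc, one_mul, mul_one, mul_smul_comm,
            mul_smul, smul_sub]
          abel
      _ = ∑ i ∈ s, (w i * w i) • g i - m * m - m * m + m * 1 * m := by
          rw [Finset.sum_add_distrib, Finset.sum_sub_distrib, Finset.sum_sub_distrib,
            ← Finset.sum_mul, ← Finset.mul_sum, ← Finset.sum_mul, ← Finset.mul_sum, hsum, ← hm]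
      _ = ∑ i ∈ s, (w i * w i) • g i - m * m := by rw [mul_one]; abel
  exact sub_nonneg.mp (hexpand ▸ hdev)

end Variance

section Kadison

variable {A B : Type*} [CStarAlgebra A] [PartialOrder A] [StarOrderedRing A]
  [CStarAlgebra B] [PartialOrder B] [StarOrderedRing B]

lemma aeval_bernsteinPolynomial_nonneg {a : A} (ha : 0 ≤ a) (ha1 : a ≤ 1) (n k : ℕ) :
    0 ≤ Polynomial.aeval a (bernsteinPolynomial ℝ n k) := by
  rw [← cfc_polynomial _ a]
  refine cfc_nonneg fun x hx ↦ ?_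
  have hx0 : 0 ≤ x := spectrum_nonneg_of_nonneg ha hx
  have hx1 : x ≤ 1 := (le_algebraMap_iff_spectrum_le (r := 1)).mp (by simpa using ha1) x hx
  have : 0 ≤ 1 - x := sub_nonneg.mpr hx1
  simp only [bernsteinPolynomial, Polynomial.eval_mul, Polynomial.eval_pow, Polynomial.eval_natCast,
    Polynomial.eval_X, Polynomial.eval_sub, Polynomial.eval_one]
  positivity

lemma sum_sq_smul_bernsteinPolynomial (n : ℕ) :
    ∑ k ∈ Finset.range (n + 1), ((k : ℝ) * k) • bernsteinPolynomial ℝ n k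
      = (n * (n - 1) : ℝ) • Polynomial.X ^ 2 + (n : ℝ) • Polynomial.X := by
  have hsplit (k : ℕ) : ((k : ℝ) * k) • bernsteinPolynomial ℝ n k
      = (k * (k - 1)) • bernsteinPolynomial ℝ n k + k • bernsteinPolynomial ℝ n k := by
    rw [← add_smul, ← Nat.cast_smul_eq_nsmul ℝ]
    cases k <;> simp; ring_nf
  rw [Finset.sum_congr rfl fun k _ ↦ hsplit k, Finset.sum_add_distrib,
    bernsteinPolynomial.sum_mul_smul, bernsteinPolynomial.sum_smul,
    ← Nat.cast_smul_eq_nsmul ℝ, ← Nat.cast_smul_eq_nsmul ℝ]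
  cases n <;> simp

lemma map_mul_self_le_add_inv_smul {Φ : A →ₚ[ℂ] B} (hΦ : Φ 1 = 1) {a : A} (ha : 0 ≤ a)
    (ha1 : a ≤ 1) {n : ℕ} (hn : n ≠ 0) :
    Φ a * Φ a ≤ Φ (a * a) + (n : ℝ)⁻¹ • (Φ a - Φ (a * a)) := by
  set g : ℕ → B := fun k ↦ Φ (Polynomial.aeval a (bernsteinPolynomial ℝ n k))
  have hg_smul (w : ℕ → ℝ) : ∑ k ∈ Finset.range (n + 1), w k • g k = Φ (Polynomial.aeval a
      (∑ k ∈ Finset.range (n + 1), w k • bernsteinPolynomial ℝ n k)) := by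
    simp only [g, map_sum, map_smul, PositiveLinearMap.map_smul_of_tower]
  have hsum : ∑ k ∈ Finset.range (n + 1), g k = 1 := by
    simpa [bernsteinPolynomial.sum, hΦ] using hg_smul 1
  have hmean : ∑ k ∈ Finset.range (n + 1), (k : ℝ) • g k = (n : ℝ) • Φ a := by
    rw [hg_smul]
    simp only [Nat.cast_smul_eq_nsmul, bernsteinPolynomial.sum_smul, map_nsmul, Polynomial.aeval_X]
  have hsq : ∑ k ∈ Finset.range (n + 1), ((k : ℝ) * k) • g k
      = (n * (n - 1) : ℝ) • Φ (a * a) + (n : ℝ) • Φ a := by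
    rw [hg_smul, sum_sq_smul_bernsteinPolynomial]
    simp only [map_add, map_smul, map_pow, Polynomial.aeval_X, PositiveLinearMap.map_smul_of_tower]
    rw [sq]
  have hn0 : (n : ℝ) ≠ 0 := Nat.cast_ne_zero.mpr hn
  have hvar := sq_sum_smul_le_sum_sq_smul (s := Finset.range (n + 1)) (g := g)
    (fun k _ ↦ Φ.map_nonneg (aeval_bernsteinPolynomial_nonneg ha ha1 n k)) hsum (fun k ↦ (k : ℝ))
  rw [hmean, hsq] at hvar
  have hscaled := smul_le_smul_of_nonneg_left hvar (by positivity : (0 : ℝ) ≤ (n * n : ℝ)⁻¹)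
  calc Φ a * Φ a = (n * n : ℝ)⁻¹ • ((n : ℝ) • Φ a * (n : ℝ) • Φ a) := by
        rw [smul_mul_smul_comm, inv_smul_smul₀ (mul_ne_zero hn0 hn0)]
    _ ≤ _ := hscaled
    _ = Φ (a * a) + (n : ℝ)⁻¹ • (Φ a - Φ (a * a)) := by
        match_scalars <;> field_simp
        ring

lemma map_mul_self_le_of_le_one {Φ : A →ₚ[ℂ] B} (hΦ : Φ 1 = 1) {a : A} (ha : 0 ≤ a)
    (ha1 : a ≤ 1) : Φ a * Φ a ≤ Φ (a * a) := by
  have hlim : Tendsto (fun n : ℕ ↦ Φ (a * a) + (n : ℝ)⁻¹ • (Φ a - Φ (a * a))) atTop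
      (𝓝 (Φ (a * a))) := by
    simpa using ((tendsto_inv_atTop_nhds_zero_nat (𝕜 := ℝ)).smul_const
      (Φ a - Φ (a * a))).const_add (Φ (a * a))
  refine ge_of_tendsto hlim ?_
  filter_upwards [eventually_ne_atTop 0] with n hn
  exact map_mul_self_le_add_inv_smul hΦ ha ha1 hn

theorem kadison_inequality {Φ : A →ₚ[ℂ] B} (hΦ : Φ 1 = 1) {a : A} (ha : IsSelfAdjoint a) :
    Φ a * Φ a ≤ Φ (a * a) := by
  set r : ℝ := ‖a‖ + 1
  have hr : 0 < r := by positivity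
  have hnorm : algebraMap ℝ A ‖a‖ ≤ r • 1 := by
    rw [← Algebra.algebraMap_eq_smul_one]
    exact algebraMap_mono A (by simp [r])
  have hupper : a ≤ r • 1 := ha.le_algebraMap_norm_self.trans hnorm
  have hlower : 0 ≤ a + r • 1 := by
    have := (neg_le.mp ha.neg_algebraMap_norm_le_self).trans hnorm
    exact neg_le_iff_add_nonneg'.mp this
  set t : ℝ := (2 * r)⁻¹
  have ht0 : 0 < t := inv_pos.mpr (mul_pos two_pos hr)
  have hb0 : 0 ≤ t • (a + r • 1) := smul_nonneg ht0.le hlower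
  have hb1 : t • (a + r • 1) ≤ 1 := by
    calc t • (a + r • 1) ≤ t • (r • 1 + r • 1) := by gcongr
      _ = 1 := by rw [← add_smul, ← two_mul, inv_smul_smul₀ (by positivity)]
  have hrescale : Φ (t • (a + r • 1) * t • (a + r • 1)) - Φ (t • (a + r • 1)) * Φ (t • (a + r • 1))
      = (t * t) • (Φ (a * a) - Φ a * Φ a) := by
    simp only [PositiveLinearMap.map_smul_of_tower, map_add, hΦ, add_mul, mul_add,
      smul_mul_assoc, mul_smul_comm, one_mul, mul_one]
    module
  have hnonneg := hrescale ▸ sub_nonneg.mpr (map_mul_self_le_of_le_one hΦ hb0 hb1)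
  exact sub_nonneg.mp ((smul_nonneg_iff_nonneg_of_pos_left (by positivity)).mp hnonneg)

lemma isStrictlyPositive_map {Φ : A →ₚ[ℂ] B} (hΦ : Φ 1 = 1) {a : A}
    (ha : IsStrictlyPositive a) : IsStrictlyPositive (Φ a) := by
  rcases subsingleton_or_nontrivial A with _ | _
  · rw [Subsingleton.elim a 1, hΦ]
    exact isStrictlyPositive_one
  obtain ⟨r, hr, hra⟩ := (CFC.exists_pos_algebraMap_le_iff ha.isSelfAdjoint).mpr
    fun x hx ↦ ha.spectrum_pos hx
  have hΦr : algebraMap ℝ B r ≤ Φ a := by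
    simpa only [Algebra.algebraMap_eq_smul_one, PositiveLinearMap.map_smul_of_tower, hΦ] using
      OrderHomClass.mono Φ hra
  exact (isStrictlyPositive_algebraMap hr).of_le hΦr

/-- The conjugation `x ↦ star w * x * w` as a positive linear map, used to normalize a positive map
to a unital one. -/
noncomputable def conjugation (w : A) : A →ₚ[ℂ] A :=
  .mk₀ (LinearMap.mulLeftRight ℂ (star w, w)) fun _ hx ↦ by
    simpa using star_left_conjugate_nonneg hx w

lemma conjugation_rpow_apply (a : A) (t : ℝ) (x : A) :
    conjugation (a ^ t) x = a ^ t * x * a ^ t := by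
  change star (a ^ t) * x * a ^ t = _
  rw [(isSelfAdjoint_rpow a t).star_eq]

theorem map_mul_rpow_neg_one_mul_map_le {Φ : A →ₚ[ℂ] B} {b c : A} (hb : IsSelfAdjoint b)
    (hc : IsStrictlyPositive c) (hΦc : IsStrictlyPositive (Φ c)) :
    Φ b * Φ c ^ (-1 : ℝ) * Φ b ≤ Φ (b * c ^ (-1 : ℝ) * b) := by
  set t : ℝ := -(1 / 2) with ht
  have htwo : 2 * t = -1 := by norm_num [ht]
  let Ψ : A →ₚ[ℂ] B := ((conjugation (Φ c ^ t)).comp Φ).comp (conjugation (c ^ (-t)))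
  have hΨ (x : A) : Ψ (c ^ t * x * c ^ t) = Φ c ^ t * Φ x * Φ c ^ t := by
    change conjugation (Φ c ^ t) (Φ (conjugation (c ^ (-t)) (c ^ t * x * c ^ t))) = _
    rw [conjugation_rpow_apply, conjugation_rpow_apply, rpow_neg_conjugate_rpow_conjugate hc]
  have hΨ_one : Ψ 1 = 1 := by
    rw [← CFC.conjugate_rpow_neg_one_half c, hΨ, CFC.conjugate_rpow_neg_one_half (Φ c)]
  have hkadison := kadison_inequality hΨ_one (hb.conjugate_self (isSelfAdjoint_rpow c t))
  rwa [hΨ, rpow_conjugate_mul_self hΦc, rpow_conjugate_mul_self hc, hΨ,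
    rpow_conjugate_le_rpow_conjugate_iff hΦc, htwo] at hkadison

end Kadison

section Jensen

variable {A B : Type*} [CStarAlgebra A] [PartialOrder A] [StarOrderedRing A]
  [CStarAlgebra B] [PartialOrder B] [StarOrderedRing B]

lemma map_rpow_midpoint_le {Φ : A →ₚ[ℂ] B} (hΦ : Φ 1 = 1) {a : A} (ha : IsStrictlyPositive a)
    {p q : ℝ} (hp : Φ (a ^ p) ≤ Φ a ^ p) (hq : Φ (a ^ q) ≤ Φ a ^ q) :
    Φ (a ^ ((p + q) / 2)) ≤ Φ a ^ ((p + q) / 2) := by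
  set r := (p + q) / 2
  have hΦa := isStrictlyPositive_map hΦ ha
  have haq : IsStrictlyPositive (a ^ q) := .rpow a q ha
  have hΦaq := isStrictlyPositive_map hΦ haq
  refine le_rpow_midpoint_of_conjugate_le hΦa (Φ.map_nonneg CFC.rpow_nonneg) ?_
  calc Φ (a ^ r) * Φ a ^ (-q) * Φ (a ^ r)
      ≤ Φ (a ^ r) * Φ (a ^ q) ^ (-1 : ℝ) * Φ (a ^ r) := by
        refine conjugate_le_conjugate_of_nonneg ?_ (Φ.map_nonneg CFC.rpow_nonneg)
        have := CStarAlgebra.rpow_neg_one_le_rpow_neg_one hq hΦaq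
        rwa [rpow_rpow_of_isStrictlyPositive hΦa, mul_neg_one] at this
    _ ≤ Φ (a ^ r * (a ^ q) ^ (-1 : ℝ) * a ^ r) :=
        map_mul_rpow_neg_one_mul_map_le (isSelfAdjoint_rpow a r) haq hΦaq
    _ = Φ (a ^ p) := by
        rw [rpow_rpow_of_isStrictlyPositive ha, rpow_mul_rpow_mul_rpow ha]
        congr 2
        ring
    _ ≤ Φ a ^ p := hp

lemma Icc_zero_one_subset_of_midpoint_mem {s : Set ℝ} (hs : IsClosed s) (h0 : 0 ∈ s) (h1 : 1 ∈ s)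
    (hmid : ∀ x ∈ s, ∀ y ∈ s, (x + y) / 2 ∈ s) : Set.Icc 0 1 ⊆ s := by
  refine (hs.inter isClosed_Icc).Icc_subset_of_forall_exists_gt h0 fun x hx y hxy ↦ ?_
  have hdyadic (k : ℕ) : x + (1 - x) * (1 / 2) ^ k ∈ s := by
    induction k with
    | zero => simpa using h1
    | succ k ih =>
      convert hmid x hx.1 _ ih using 1
      ring
  have hx1 : 0 < 1 - x := sub_pos.mpr hx.2.2
  obtain ⟨k, hk⟩ := exists_pow_lt_of_lt_one (div_pos (sub_pos.mpr hxy) hx1)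
    (one_half_lt_one (α := ℝ))
  rw [lt_div_iff₀' hx1] at hk
  exact ⟨_, hdyadic k, lt_add_of_pos_right x (by positivity), by linarith⟩

theorem map_rpow_le_rpow_map {Φ : A →ₚ[ℂ] B} (hΦ : Φ 1 = 1) {a : A} (ha : IsStrictlyPositive a)
    {p : ℝ} (hp : p ∈ Set.Icc (0 : ℝ) 1) : Φ (a ^ p) ≤ Φ a ^ p := by
  have hΦa := isStrictlyPositive_map hΦ ha
  have hclosed : IsClosed {p : ℝ | Φ (a ^ p) ≤ Φ a ^ p} :=
    isClosed_le ((map_continuous Φ).comp (continuous_rpow_exponent ha))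
      (continuous_rpow_exponent hΦa)
  refine Icc_zero_one_subset_of_midpoint_mem hclosed ?_ ?_
    (fun x hx y hy ↦ map_rpow_midpoint_le hΦ ha hx hy) hp
  · simp [CFC.rpow_zero a ha.nonneg, CFC.rpow_zero (Φ a) hΦa.nonneg, hΦ]
  · simp [CFC.rpow_one a ha.nonneg, CFC.rpow_one (Φ a) hΦa.nonneg]

theorem rpow_map_le_map_rpow {Φ : A →ₚ[ℂ] B} (hΦ : Φ 1 = 1) {a : A} (ha : IsStrictlyPositive a)
    {p : ℝ} (hp : p ∈ Set.Icc (1 : ℝ) 2) : Φ a ^ p ≤ Φ (a ^ p) := by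
  have hΦa := isStrictlyPositive_map hΦ ha
  have hc : IsStrictlyPositive (a ^ (2 - p)) := .rpow a _ ha
  have hΦc := isStrictlyPositive_map hΦ hc
  calc Φ a ^ p = Φ a * Φ a ^ (-(2 - p)) * Φ a := by
        nth_rw 2 4 [← CFC.rpow_one (Φ a) hΦa.nonneg]
        rw [rpow_mul_rpow_mul_rpow hΦa]
        congr 1
        ring
    _ ≤ Φ a * Φ (a ^ (2 - p)) ^ (-1 : ℝ) * Φ a := by
        refine conjugate_le_conjugate_of_nonneg ?_ hΦa.nonneg
        have := CStarAlgebra.rpow_neg_one_le_rpow_neg_one (map_rpow_le_rpow_map hΦ ha (p := 2 - p)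
          ⟨by linarith [hp.2], by linarith [hp.1]⟩) hΦc
        rwa [rpow_rpow_of_isStrictlyPositive hΦa, mul_neg_one] at this
    _ ≤ Φ (a * (a ^ (2 - p)) ^ (-1 : ℝ) * a) :=
        map_mul_rpow_neg_one_mul_map_le ha.isSelfAdjoint hc hΦc
    _ = Φ (a ^ p) := by
        rw [rpow_rpow_of_isStrictlyPositive ha]
        nth_rw 1 3 [← CFC.rpow_one a ha.nonneg]
        rw [rpow_mul_rpow_mul_rpow ha]
        congr 2
        ring

end Jensen

section Furuta

variable {A : Type*} [CStarAlgebra A] [PartialOrder A] [StarOrderedRing A]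

lemma mul_rpow_neg_half_mem_unitary {x : A} (hx : IsUnit x) :
    x * (star x * x) ^ (-(1 / 2) : ℝ) ∈ unitary A := by
  have habs : IsStrictlyPositive (star x * x) :=
    (hx.star.mul hx).isStrictlyPositive (star_mul_self_nonneg x)
  have hstar_mul :
      star (x * (star x * x) ^ (-(1 / 2) : ℝ)) * (x * (star x * x) ^ (-(1 / 2) : ℝ)) = 1 := by
    rw [star_mul, (isSelfAdjoint_rpow _ _).star_eq]
    simpa only [mul_assoc] using CFC.conjugate_rpow_neg_one_half (star x * x)
  obtain ⟨u, hu⟩ := hx.mul (IsStrictlyPositive.rpow _ (-(1 / 2)) habs).isUnit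
  rw [← hu] at hstar_mul ⊢
  rw [Unitary.mem_iff, Units.mul_eq_one_iff_eq_inv.mp hstar_mul]
  exact ⟨u.inv_mul, u.mul_inv⟩

lemma unitary_conjugate_rpow {u a : A} (hu : u ∈ unitary A) (ha : IsStrictlyPositive a) (t : ℝ) :
    (u * a * star u) ^ t = u * a ^ t * star u := by
  have hnonneg : 0 ≤ u * a * star u := star_right_conjugate_nonneg ha.nonneg u
  let φ := Unitary.conjStarAlgAut ℂ A ⟨u, hu⟩
  have hφ (x : A) : φ x = u * x * star u := Unitary.conjStarAlgAut_apply ..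
  rw [CFC.rpow_eq_cfc_real hnonneg, CFC.rpow_eq_cfc_real ha.nonneg, ← hφ, ← hφ]
  refine (StarAlgHomClass.map_cfc (S := ℂ) φ (fun x : ℝ ↦ x ^ t) a (fun x hx ↦ ?_) ?_
    ha.isSelfAdjoint (hφ a ▸ .of_nonneg hnonneg)).symm
  · exact (Real.continuousAt_rpow_const x t (.inl (ha.spectrum_pos hx).ne')).continuousWithinAt
  · simp only [funext hφ]
    fun_prop

lemma mul_star_rpow {x : A} (hx : IsUnit x) (t : ℝ) :
    (x * star x) ^ t = x * (star x * x) ^ (t - 1) * star x := by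
  have habs : IsStrictlyPositive (star x * x) :=
    (hx.star.mul hx).isStrictlyPositive (star_mul_self_nonneg x)
  have hconj (s : ℝ) : x * (star x * x) ^ (-(1 / 2) : ℝ) * (star x * x) ^ s
      * star (x * (star x * x) ^ (-(1 / 2) : ℝ)) = x * (star x * x) ^ (s - 1) * star x := by
    calc _ = x * ((star x * x) ^ (-(1 / 2) : ℝ) * (star x * x) ^ s * (star x * x) ^ (-(1 / 2) : ℝ))
          * star x := by rw [star_mul, (isSelfAdjoint_rpow _ _).star_eq]; simp only [mul_assoc]
      _ = _ := by rw [rpow_mul_rpow_mul_rpow habs]; ring_nf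
  have hself := hconj 1
  rw [CFC.rpow_one _ habs.nonneg, sub_self, CFC.rpow_zero _ habs.nonneg, mul_one] at hself
  rw [← hself, unitary_conjugate_rpow (mul_rpow_neg_half_mem_unitary hx) habs, hconj]

lemma isStrictlyPositive_rpow_conjugate {a b : A} (ha : IsStrictlyPositive a)
    (hb : IsStrictlyPositive b) (t : ℝ) : IsStrictlyPositive (a ^ t * b * a ^ t) :=
  .conjugate_of_isUnit_of_isSelfAdjoint _ _ (IsStrictlyPositive.rpow a t ha).isUnit
    (isSelfAdjoint_rpow a t) hb

lemma rpow_conjugate_rpow_rpow {a b : A} (ha : IsStrictlyPositive a) (hb : IsStrictlyPositive b)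
    (r s t : ℝ) : (b ^ r * a ^ s * b ^ r) ^ t
      = b ^ r * (a ^ (s / 2) * (a ^ (s / 2) * b ^ (2 * r) * a ^ (s / 2)) ^ (t - 1) * a ^ (s / 2))
        * b ^ r := by
  have hstar : star (b ^ r * a ^ (s / 2)) = a ^ (s / 2) * b ^ r := by
    rw [star_mul, (isSelfAdjoint_rpow a _).star_eq, (isSelfAdjoint_rpow b _).star_eq]
  have hpolar := mul_star_rpow ((IsStrictlyPositive.rpow b r hb).isUnit.mul
    (IsStrictlyPositive.rpow a (s / 2) ha).isUnit) t
  rw [hstar] at hpolar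
  calc (b ^ r * a ^ s * b ^ r) ^ t = (b ^ r * a ^ (s / 2) * (a ^ (s / 2) * b ^ r)) ^ t := by
        rw [← add_halves s, CFC.rpow_add ha.isUnit, add_halves]; simp only [mul_assoc]
    _ = _ := by
        rw [hpolar, two_mul, CFC.rpow_add hb.isUnit]; simp only [mul_assoc]

lemma furuta_of_le_half {a b : A} (ha : IsStrictlyPositive a) (hab : a ≤ b) {r s : ℝ}
    (hr : 0 ≤ r) (hr' : r ≤ 1 / 2) (hs : 1 ≤ s) :
    (b ^ r * a ^ s * b ^ r) ^ ((1 + 2 * r) / (s + 2 * r)) ≤ b ^ (1 + 2 * r) := by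
  have hb : IsStrictlyPositive b := ha.of_le hab
  have hden : 0 < s + 2 * r := by linarith
  set t := (1 + 2 * r) / (s + 2 * r)
  have ht0 : 0 ≤ t := by positivity
  have ht1 : t ≤ 1 := (div_le_one hden).mpr (by linarith)
  have hst : (s + 2 * r) * t = 1 + 2 * r := mul_div_cancel₀ _ hden.ne'
  have hlower : a ^ (s + 2 * r) ≤ a ^ (s / 2) * b ^ (2 * r) * a ^ (s / 2) := by
    calc a ^ (s + 2 * r) = a ^ (s / 2) * a ^ (2 * r) * a ^ (s / 2) := by
          rw [rpow_mul_rpow_mul_rpow ha]; ring_nf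
      _ ≤ _ := (rpow_conjugate_le_rpow_conjugate_iff ha _).mpr <|
          CFC.rpow_le_rpow ⟨by linarith, by linarith⟩ hab
  have hinner : (a ^ (s / 2) * b ^ (2 * r) * a ^ (s / 2)) ^ (t - 1) ≤ a ^ (1 - s) := by
    have hanti := rpow_neg_le_rpow_neg (.rpow a _ ha) hlower (t := 1 - t)
      ⟨by linarith, by linarith⟩
    rw [rpow_rpow_of_isStrictlyPositive ha, neg_sub] at hanti
    rwa [show (s + 2 * r) * (t - 1) = 1 - s by linarith] at hanti
  rw [rpow_conjugate_rpow_rpow ha hb]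
  calc _ ≤ b ^ r * (a ^ (s / 2) * a ^ (1 - s) * a ^ (s / 2)) * b ^ r := by
        rwa [rpow_conjugate_le_rpow_conjugate_iff hb, rpow_conjugate_le_rpow_conjugate_iff ha]
    _ = b ^ r * a * b ^ r := by
        rw [rpow_mul_rpow_mul_rpow ha, show s / 2 + (1 - s) + s / 2 = 1 by ring,
          CFC.rpow_one a ha.nonneg]
    _ ≤ b ^ r * b * b ^ r := (rpow_conjugate_le_rpow_conjugate_iff hb r).mpr hab
    _ = b ^ (1 + 2 * r) := by
        nth_rw 2 [← CFC.rpow_one b hb.nonneg]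
        rw [rpow_mul_rpow_mul_rpow hb]; ring_nf

-- For `r > 1 / 2`, put `c := b ^ (1 / 2) * a ^ s * b ^ (1 / 2)`: the inequality for `a ≤ b` with
-- parameters `r, s` is the one for `c ^ (2 / (s + 1)) ≤ b ^ 2` with parameters
-- `(r - 1 / 2) / 2, (s + 1) / 2`.
lemma furuta_of_le_nat_half (k : ℕ) {a b : A} (ha : IsStrictlyPositive a) (hab : a ≤ b) {r s : ℝ}
    (hr : 0 ≤ r) (hrk : r ≤ (k + 1) / 2) (hs : 1 ≤ s) :
    (b ^ r * a ^ s * b ^ r) ^ ((1 + 2 * r) / (s + 2 * r)) ≤ b ^ (1 + 2 * r) := by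
  induction k generalizing a b r s with
  | zero => exact furuta_of_le_half ha hab hr (by simpa using hrk) hs
  | succ k ih =>
    rcases le_or_gt r (1 / 2) with hr' | hr'
    · exact furuta_of_le_half ha hab hr hr' hs
    have hb : IsStrictlyPositive b := ha.of_le hab
    set c := b ^ (1 / 2 : ℝ) * a ^ s * b ^ (1 / 2 : ℝ) with hc_def
    have hc : IsStrictlyPositive c := isStrictlyPositive_rpow_conjugate hb (.rpow a s ha) _
    have hhalf : c ^ (2 / (s + 1)) ≤ b ^ (2 : ℝ) := by
      convert furuta_of_le_half ha hab (r := 1 / 2) (by norm_num) le_rfl hs using 2 <;> norm_num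
    push_cast at hrk
    have hstep := ih (.rpow c _ hc) hhalf (r := (r - 1 / 2) / 2) (s := (s + 1) / 2)
      (by linarith) (by linarith) (by linarith)
    rw [rpow_rpow_of_isStrictlyPositive hc, rpow_rpow_of_isStrictlyPositive hb,
      rpow_rpow_of_isStrictlyPositive hb, div_mul_div_cancel₀ (by linarith), div_self two_ne_zero,
      CFC.rpow_one c hc.nonneg, mul_div_cancel₀ _ two_ne_zero] at hstep
    have hcollect : b ^ (r - 1 / 2) * c * b ^ (r - 1 / 2) = b ^ r * a ^ s * b ^ r := by
      calc b ^ (r - 1 / 2) * c * b ^ (r - 1 / 2)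
          = (b ^ (r - 1 / 2) * b ^ (1 / 2 : ℝ)) * a ^ s * (b ^ (1 / 2 : ℝ) * b ^ (r - 1 / 2)) := by
            simp only [hc_def, mul_assoc]
        _ = b ^ r * a ^ s * b ^ r := by
            rw [← CFC.rpow_add hb.isUnit, ← CFC.rpow_add hb.isUnit]; ring_nf
    rw [hcollect] at hstep
    convert hstep using 2
    · rw [div_eq_div_iff (by linarith) (by linarith)]; ring
    · ring

theorem furuta_inequality {a b : A} (ha : IsStrictlyPositive a) (hab : a ≤ b) {r s : ℝ}
    (hr : 0 ≤ r) (hs : 1 ≤ s) :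
    (b ^ r * a ^ s * b ^ r) ^ ((1 + 2 * r) / (s + 2 * r)) ≤ b ^ (1 + 2 * r) := by
  obtain ⟨k, hk⟩ := exists_nat_ge (2 * r)
  exact furuta_of_le_nat_half k ha hab hr (by linarith) hs

theorem abs_mul_le_rpow_one_add {a b : A} (ha : IsStrictlyPositive a) (hb : IsStrictlyPositive b)
    {α : ℝ} (hα : 0 < α) (hab : a ≤ b ^ α) : CFC.abs (a * b) ≤ b ^ (1 + α) := by
  have hbr : (b ^ α) ^ α⁻¹ = b := by
    rw [rpow_rpow_of_isStrictlyPositive hb, mul_inv_cancel₀ hα.ne', CFC.rpow_one b hb.nonneg]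
  have hfuruta := furuta_inequality ha hab (inv_nonneg.mpr hα.le) one_le_two
  rw [hbr] at hfuruta
  have hconj : IsStrictlyPositive (b * a ^ (2 : ℝ) * b) := by
    simpa only [CFC.rpow_one b hb.nonneg] using
      isStrictlyPositive_rpow_conjugate hb (.rpow a 2 ha) 1
  have hroot := CFC.rpow_le_rpow (p := (1 + α) / (α + 2)) ⟨by positivity,
    (div_le_one (by positivity)).mpr (by linarith)⟩ hfuruta
  rw [rpow_rpow_of_isStrictlyPositive hconj, rpow_rpow_of_isStrictlyPositive hb,
    rpow_rpow_of_isStrictlyPositive hb] at hroot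
  calc CFC.abs (a * b) = (b * a ^ (2 : ℝ) * b) ^ (1 / 2 : ℝ) := by
        rw [CFC.abs, CFC.sqrt_eq_rpow, star_mul, ha.isSelfAdjoint.star_eq,
          hb.isSelfAdjoint.star_eq, rpow_two ha.nonneg]
        simp only [mul_assoc]
    _ ≤ b ^ (1 + α) := by
        convert hroot using 2 <;> field_simp
        ring

end Furuta

section Asymmetric

variable {A B : Type*} [CStarAlgebra A] [PartialOrder A] [StarOrderedRing A]
  [CStarAlgebra B] [PartialOrder B] [StarOrderedRing B]

lemma abs_map_rpow_mul_map_rpow_le_of_isStrictlyPositive {Φ : A →ₚ[ℂ] B} (hΦ : Φ 1 = 1) {a : A}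
    (ha : IsStrictlyPositive a) {p q : ℝ} (hp : 0 < p) (hpq : p ≤ q) :
    CFC.abs (Φ (a ^ p) * Φ (a ^ q)) ≤ Φ (a ^ (p + q)) := by
  have hq : 0 < q := hp.trans_le hpq
  have hα0 : 0 < p / q := div_pos hp hq
  have hα1 : p / q ≤ 1 := (div_le_one hq).mpr hpq
  have haq : IsStrictlyPositive (a ^ q) := .rpow a q ha
  have hconcave : Φ (a ^ p) ≤ Φ (a ^ q) ^ (p / q) := by
    have := map_rpow_le_rpow_map hΦ haq ⟨hα0.le, hα1⟩
    rwa [rpow_rpow_of_isStrictlyPositive ha, mul_div_cancel₀ p hq.ne'] at this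
  have hexponent : q * (1 + p / q) = p + q := by
    rw [mul_add, mul_one, mul_div_cancel₀ p hq.ne', add_comm]
  calc CFC.abs (Φ (a ^ p) * Φ (a ^ q)) ≤ Φ (a ^ q) ^ (1 + p / q) :=
        abs_mul_le_rpow_one_add (isStrictlyPositive_map hΦ (.rpow a p ha))
          (isStrictlyPositive_map hΦ haq) hα0 hconcave
    _ ≤ Φ ((a ^ q) ^ (1 + p / q)) :=
        rpow_map_le_map_rpow hΦ haq ⟨by linarith, by linarith⟩
    _ = Φ (a ^ (p + q)) := by rw [rpow_rpow_of_isStrictlyPositive ha, hexponent]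

lemma continuousOn_rpow {s : ℝ} (hs : 0 < s) : ContinuousOn (fun a : A ↦ a ^ s) {a | 0 ≤ a} := by
  lift s to ℝ≥0 using hs.le
  simpa only [CFC.nnrpow_eq_rpow (NNReal.coe_pos.mp hs)] using CFC.continuousOn_nnrpow (A := A) s

lemma tendsto_add_algebraMap_rpow {a : A} (ha : 0 ≤ a) {s : ℝ} (hs : 0 < s) :
    Tendsto (fun ε : ℝ ↦ (a + algebraMap ℝ A ε) ^ s) (𝓝[>] 0) (𝓝 (a ^ s)) := by
  have hbase : Tendsto (fun ε : ℝ ↦ a + algebraMap ℝ A ε) (𝓝[>] 0) (𝓝 a) := by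
    have : Continuous fun ε : ℝ ↦ a + algebraMap ℝ A ε := by fun_prop
    simpa using (this.tendsto 0).mono_left nhdsWithin_le_nhds
  refine (continuousOn_rpow hs a ha).tendsto.comp (tendsto_nhdsWithin_iff.mpr ⟨hbase, ?_⟩)
  filter_upwards [self_mem_nhdsWithin] with ε hε
  exact add_nonneg ha (isStrictlyPositive_algebraMap hε).nonneg

end Asymmetric

end AsymmetricKadison

open AsymmetricKadison in
theorem asymmetric_kadison_general {A B : Type*}
    [CStarAlgebra A] [PartialOrder A] [StarOrderedRing A]
    [CStarAlgebra B] [PartialOrder B] [StarOrderedRing B]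
    {Φ : A →ₚ[ℂ] B} (hΦ : Φ 1 = 1) {a : A} (ha : 0 ≤ a) {p q : ℝ} (hp : 0 ≤ p) (hpq : p ≤ q) :
    CFC.abs (Φ (a ^ p) * Φ (a ^ q)) ≤ Φ (a ^ (p + q)) := by
  rcases hp.eq_or_lt with rfl | hp
  · rw [CFC.rpow_zero a ha, hΦ, one_mul, zero_add,
      CFC.abs_of_nonneg _ (Φ.map_nonneg CFC.rpow_nonneg)]
  have hlim {s : ℝ} (hs : 0 < s) :
      Tendsto (fun ε : ℝ ↦ Φ ((a + algebraMap ℝ A ε) ^ s)) (𝓝[>] 0) (𝓝 (Φ (a ^ s))) :=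
    ((map_continuous Φ).tendsto _).comp (tendsto_add_algebraMap_rpow ha hs)
  have hq : 0 < q := hp.trans_le hpq
  refine le_of_tendsto_of_tendsto
    ((CFC.continuous_abs.tendsto _).comp ((hlim hp).mul (hlim hq))) (hlim (add_pos hp hq)) ?_
  filter_upwards [self_mem_nhdsWithin] with ε hε
  exact abs_map_rpow_mul_map_rpow_le_of_isStrictlyPositive hΦ
    (.nonneg_add ha (isStrictlyPositive_algebraMap hε)) hp hpq

namespace AsymmetricKadison

section Matrix

open scoped MatrixOrder Matrix.Norms.L2Operator

variable {n : ℕ}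

lemma mpow_eq_rpow {A : Matrix (Fin n) (Fin n) ℂ} (hA : A.PosSemidef) (p : ℝ) :
    mpow A p = A ^ p :=
  (CFC.rpow_eq_cfc_real hA.nonneg).symm

lemma matAbs_eq_abs (X : Matrix (Fin n) (Fin n) ℂ) : matAbs X = CFC.abs X := by
  rw [CFC.abs, CFC.sqrt_eq_rpow, CFC.rpow_eq_cfc_real (star_mul_self_nonneg X), matAbs,
    Matrix.star_eq_conjTranspose, funext Real.sqrt_eq_rpow]

end Matrix

end AsymmetricKadison

/-- Asymmetric Kadison inequality: if `Φ` is a unital positive linear map, `A ≥ 0` and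
`0 ≤ p ≤ q`, then `|Φ(A^p) Φ(A^q)| ≤ Φ(A^{p+q})`. -/
theorem asymmetric_kadison {n d : ℕ}
    (Φ : Matrix (Fin n) (Fin n) ℂ →ₗ[ℂ] Matrix (Fin d) (Fin d) ℂ)
    (hΦ1 : Φ 1 = 1) (hΦpos : ∀ X : Matrix (Fin n) (Fin n) ℂ, X.PosSemidef → (Φ X).PosSemidef)
    (A : Matrix (Fin n) (Fin n) ℂ) (hA : A.PosSemidef)
    (p q : ℝ) (hp : 0 ≤ p) (hpq : p ≤ q) :
    loewnerLE (matAbs (Φ (mpow A p) * Φ (mpow A q))) (Φ (mpow A (p + q))) := by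
  open scoped MatrixOrder Matrix.Norms.L2Operator in
  let Ψ : Matrix (Fin n) (Fin n) ℂ →ₚ[ℂ] Matrix (Fin d) (Fin d) ℂ :=
    .mk₀ Φ fun X hX ↦ (hΦpos X (Matrix.nonneg_iff_posSemidef.mp hX)).nonneg
  simp only [AsymmetricKadison.mpow_eq_rpow hA, AsymmetricKadison.matAbs_eq_abs]
  exact Matrix.le_iff.mp (asymmetric_kadison_general (Φ := Ψ) hΦ1 hA.nonneg hp hpq)
end

section
/- If Φ : Mₙ(ℂ) → M_d(ℂ) is a unital positive linear map, A is positive semidefinite, and 0 ≤ α ≤ 1, then Φ(A)^{1+α} ≥ |Φ(A^α)Φ(A)|. -/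
open scoped Matrix ComplexOrder

/-
For a positive map `Φ` and a self-adjoint `a`, the map `h ↦ Φ (h(a))` is positive on a commutative
algebra, so the quadratic inequality `Φ(f²) - Φ(fg) Z - Z* Φ(fg) + Z* Φ(g²) Z ≥ 0` reduces to a sum
of conjugates `(fₖ - gₖ Z)* Pₖ (fₖ - gₖ Z)`, with `Pₖ` the image of a Bernstein polynomial. Choosing
`Z` optimally gives, for strictly positive `a`,
`Φ(a^((x+y)/2)) Φ(a^x)⁻¹ Φ(a^((x+y)/2)) ≤ Φ(a^y)`.
Hence the exponents `x` with `Φ(a^x) ≤ Φ(a)^x` are closed under midpoints, which yields this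
inequality on `[0, 1]` and its reverse on `[1, 2]`.

If `α ≤ 1/2`, then `Φ(a^α)² ≤ Φ(a^(2α)) ≤ Φ(a)^(2α)`, and conjugating by `Φ(a)` and taking square
roots gives the claim. If `α ≥ 1/2`, put `c = Φ(a^α)^(1/α) ≤ b = Φ(a)`; what is needed is the
Furuta-type inequality `|c^α b| ≤ b^(1+α)`, which is obtained in two half steps, each passing from
`c ≤ b` to `|c^s b^(1/2)| ≤ b^(s+1/2)`. Singular `a` are limits of strictly positive ones.
-/

open Filter Topology unitInterval

theorem ordConnected_of_isClosed_of_midpoint_mem {s : Set ℝ} (hs : IsClosed s)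
    (hmid : ∀ x ∈ s, ∀ y ∈ s, (x + y) / 2 ∈ s) : s.OrdConnected := by
  refine ⟨fun x hx y hy t ht => by_contra fun hts => ?_⟩
  have hL : IsGreatest (s ∩ Set.Iic t) (sSup (s ∩ Set.Iic t)) :=
    (hs.inter isClosed_Iic).isGreatest_csSup ⟨x, hx, ht.1⟩ ⟨t, fun _ h => h.2⟩
  have hR : IsLeast (s ∩ Set.Ici t) (sInf (s ∩ Set.Ici t)) :=
    (hs.inter isClosed_Ici).isLeast_csInf ⟨y, hy, ht.2⟩ ⟨t, fun _ h => h.2⟩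
  set l := sSup (s ∩ Set.Iic t)
  set r := sInf (s ∩ Set.Ici t)
  have hlt : l < t := lt_of_le_of_ne hL.1.2 fun h => hts (h ▸ hL.1.1)
  have htr : t < r := lt_of_le_of_ne hR.1.2 fun h => hts (h ▸ hR.1.1)
  have hlr := hmid l hL.1.1 r hR.1.1
  obtain h | h := le_total ((l + r) / 2) t
  · linarith [hL.2 ⟨hlr, h⟩]
  · linarith [hR.2 ⟨hlr, h⟩]

section Powers

variable {𝒜 : Type*} [CStarAlgebra 𝒜] [PartialOrder 𝒜] [StarOrderedRing 𝒜]

theorem isSelfAdjoint_rpow (a : 𝒜) (x : ℝ) : IsSelfAdjoint (a ^ x) :=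
  CFC.rpow_nonneg.isSelfAdjoint

theorem rpow_rpow_of_isStrictlyPositive {a : 𝒜} (ha : IsStrictlyPositive a) (x y : ℝ) :
    (a ^ x) ^ y = a ^ (x * y) := by
  obtain rfl | hx := eq_or_ne x 0
  · simp [CFC.rpow_zero a ha.nonneg]
  · exact CFC.rpow_rpow a x y hx

theorem rpow_conjugate_rpow {a : 𝒜} (ha : IsStrictlyPositive a) (x y : ℝ) :
    a ^ x * a ^ y * a ^ x = a ^ (2 * x + y) := by
  rw [← CFC.rpow_add ha.isUnit, ← CFC.rpow_add ha.isUnit]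
  ring_nf

theorem conjugate_rpow {a : 𝒜} (ha : IsStrictlyPositive a) (y : ℝ) :
    a * a ^ y * a = a ^ (2 + y) := by
  simpa [CFC.rpow_one a ha.nonneg] using rpow_conjugate_rpow ha 1 y

theorem rpow_half_mul_rpow_half {a : 𝒜} (ha : IsStrictlyPositive a) :
    a ^ (1 / 2 : ℝ) * a ^ (1 / 2 : ℝ) = a := by
  rw [← CFC.rpow_add ha.isUnit, add_halves, CFC.rpow_one a ha.nonneg]

theorem sqrt_rpow_of_isStrictlyPositive {a : 𝒜} (ha : IsStrictlyPositive a) (x : ℝ) :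
    CFC.sqrt (a ^ x) = a ^ (x / 2) := by
  rw [CFC.sqrt_eq_rpow, rpow_rpow_of_isStrictlyPositive ha]
  ring_nf

theorem rpow_neg_le_rpow_neg {a b : 𝒜} (ha : IsStrictlyPositive a) (hab : a ≤ b) {p : ℝ}
    (hp : p ∈ Set.Icc 0 1) : b ^ (-p) ≤ a ^ (-p) := by
  simpa [rpow_rpow_of_isStrictlyPositive ha, rpow_rpow_of_isStrictlyPositive (ha.of_le hab)] using
    CStarAlgebra.rpow_neg_one_le_rpow_neg_one (CFC.rpow_le_rpow hp hab) (ha.rpow a p)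

theorem continuous_const_rpow_of_isStrictlyPositive {a : 𝒜} (ha : IsStrictlyPositive a) :
    Continuous fun x : ℝ => a ^ x := by
  have hpos : ∀ r ∈ spectrum ℝ a, 0 < r := fun r hr => ha.spectrum_pos hr
  have hlog : ContinuousOn Real.log (spectrum ℝ a) :=
    Real.continuousOn_log.mono fun r hr => (hpos r hr).ne'
  have hexp (x : ℝ) : a ^ x = NormedSpace.exp (x • CFC.log a) := by
    rw [CFC.log, ← cfc_smul _ _ a hlog, ← CFC.real_exp_eq_normedSpace_exp,
      ← cfc_comp' Real.exp _ a, CFC.rpow_eq_cfc_real ha.nonneg]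
    refine cfc_congr fun r hr => ?_
    simp only [smul_eq_mul, Real.rpow_def_of_pos (hpos r hr), mul_comm]
  simp_rw [hexp]
  let : NormedAlgebra ℚ 𝒜 := NormedAlgebra.restrictScalars ℚ ℝ 𝒜
  exact NormedSpace.exp_continuous.comp (continuous_id.smul continuous_const)

theorem continuousOn_rpow_of_nonneg {s : ℝ} (hs : 0 ≤ s) :
    ContinuousOn (fun a : 𝒜 => a ^ s) {a | 0 ≤ a} := by
  lift s to NNReal using hs
  obtain rfl | hs := eq_zero_or_pos s
  · exact continuousOn_const.congr fun a ha => CFC.rpow_zero a ha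
  · simpa only [← CFC.nnrpow_eq_rpow hs] using CFC.continuousOn_nnrpow s

theorem mem_closure_isStrictlyPositive {a : 𝒜} (ha : 0 ≤ a) :
    a ∈ closure {b : 𝒜 | IsStrictlyPositive b} := by
  have htendsto : Tendsto (fun ε : ℝ => a + ε • 1) (𝓝[>] 0) (𝓝 a) := by
    have : Continuous fun ε : ℝ => a + ε • (1 : 𝒜) := by fun_prop
    simpa using (this.tendsto 0).mono_left nhdsWithin_le_nhds
  refine mem_closure_of_tendsto htendsto ?_
  filter_upwards [self_mem_nhdsWithin] with ε hε
  exact (isStrictlyPositive_one.smul hε).nonneg_add ha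

theorem le_rpow_of_mul_rpow_neg_one_mul_le {b p q : 𝒜} (hb : IsStrictlyPositive b)
    (hp : IsStrictlyPositive p) (hq : 0 ≤ q) {x y : ℝ} (hpb : p ≤ b ^ x)
    (hqb : q * p ^ (-1 : ℝ) * q ≤ b ^ y) : q ≤ b ^ ((x + y) / 2) := by
  have hqb' : q * b ^ (-x) * q ≤ b ^ y := by
    refine (hq.isSelfAdjoint.conjugate_le_conjugate ?_).trans hqb
    simpa [rpow_rpow_of_isStrictlyPositive hb] using
      CStarAlgebra.rpow_neg_one_le_rpow_neg_one hpb hp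
  have hw : 0 ≤ b ^ (-x / 2) * q * b ^ (-x / 2) :=
    (isSelfAdjoint_rpow b _).conjugate_nonneg hq
  have hw_le : b ^ (-x / 2) * q * b ^ (-x / 2) ≤ b ^ ((y - x) / 2) := by
    rw [← CFC.sqrt_mul_self _ hw, ← sqrt_rpow_of_isStrictlyPositive hb (y - x)]
    refine CFC.sqrt_le_sqrt _ _ ?_
    calc b ^ (-x / 2) * q * b ^ (-x / 2) * (b ^ (-x / 2) * q * b ^ (-x / 2))
        = b ^ (-x / 2) * (q * (b ^ (-x / 2) * b ^ (-x / 2)) * q) * b ^ (-x / 2) := by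
          simp only [mul_assoc]
      _ = b ^ (-x / 2) * (q * b ^ (-x) * q) * b ^ (-x / 2) := by
          rw [← CFC.rpow_add hb.isUnit, add_halves]
      _ ≤ b ^ (-x / 2) * b ^ y * b ^ (-x / 2) :=
          (isSelfAdjoint_rpow b _).conjugate_le_conjugate hqb'
      _ = b ^ (y - x) := by
          rw [rpow_conjugate_rpow hb]
          ring_nf
  calc q = (b ^ (x / 2) * b ^ (-x / 2)) * q * (b ^ (-x / 2) * b ^ (x / 2)) := by
        rw [neg_div, CFC.rpow_mul_rpow_neg _ hb, CFC.rpow_neg_mul_rpow _ hb, one_mul, mul_one]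
    _ = b ^ (x / 2) * (b ^ (-x / 2) * q * b ^ (-x / 2)) * b ^ (x / 2) := by
        simp only [mul_assoc]
    _ ≤ b ^ (x / 2) * b ^ ((y - x) / 2) * b ^ (x / 2) :=
        (isSelfAdjoint_rpow b _).conjugate_le_conjugate hw_le
    _ = b ^ ((x + y) / 2) := by
        rw [rpow_conjugate_rpow hb]
        ring_nf

end Powers

section AbsoluteValue

variable {𝒜 : Type*} [CStarAlgebra 𝒜] [PartialOrder 𝒜] [StarOrderedRing 𝒜]

theorem abs_abs_mul (t w : 𝒜) : CFC.abs (CFC.abs t * w) = CFC.abs (t * w) := by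
  have h : star (CFC.abs t * w) * (CFC.abs t * w) = star (t * w) * (t * w) := by
    calc star (CFC.abs t * w) * (CFC.abs t * w)
        = star w * (CFC.abs t * CFC.abs t) * w := by
          simp only [star_mul, (CFC.abs_nonneg t).isSelfAdjoint.star_eq, mul_assoc]
      _ = star (t * w) * (t * w) := by
          simp only [CFC.abs_mul_abs, star_mul, mul_assoc]
  rw [CFC.abs, h, CFC.abs]

theorem isStrictlyPositive_abs {t : 𝒜} (ht : IsUnit t) : IsStrictlyPositive (CFC.abs t) :=
  (CStarAlgebra.isStrictlyPositive_iff_eq_star_mul_self.2 ⟨t, ht, rfl⟩).sqrt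

theorem isStrictlyPositive_mul_star {t : 𝒜} (ht : IsUnit t) : IsStrictlyPositive (t * star t) :=
  CStarAlgebra.isStrictlyPositive_iff_eq_star_mul_self.2 ⟨star t, ht.star, by rw [star_star]⟩

theorem abs_eq_star_mul_rpow_mul {t : 𝒜} (ht : IsUnit t) :
    CFC.abs t = star t * (t * star t) ^ (-(1 / 2) : ℝ) * t := by
  have hm := isStrictlyPositive_mul_star ht
  refine CFC.sqrt_unique ?_ (star_left_conjugate_nonneg CFC.rpow_nonneg t)
  calc star t * (t * star t) ^ (-(1 / 2) : ℝ) * t * (star t * (t * star t) ^ (-(1 / 2) : ℝ) * t)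
      = star t * ((t * star t) ^ (-(1 / 2) : ℝ) * (t * star t) * (t * star t) ^ (-(1 / 2) : ℝ)) *
          t := by
        simp only [mul_assoc]
    _ = star t * t := by
        have := rpow_conjugate_rpow hm (-(1 / 2)) 1
        norm_num [CFC.rpow_one _ hm.nonneg, CFC.rpow_zero _ hm.nonneg] at this
        rw [this, mul_one]

theorem abs_rpow_mul_rpow_half_le {a b : 𝒜} (ha : IsStrictlyPositive a) (hab : a ≤ b) {s : ℝ}
    (hs : s ∈ Set.Icc (1 / 2) (3 / 2)) :
    CFC.abs (a ^ s * b ^ (1 / 2 : ℝ)) ≤ b ^ (s + 1 / 2) := by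
  have hb := ha.of_le hab
  have hunit : IsUnit (a ^ s * b ^ (1 / 2 : ℝ)) := (ha.rpow a s).isUnit.mul (hb.rpow b _).isUnit
  have hstar : star (a ^ s * b ^ (1 / 2 : ℝ)) = b ^ (1 / 2 : ℝ) * a ^ s := by
    rw [star_mul, (isSelfAdjoint_rpow _ _).star_eq, (isSelfAdjoint_rpow _ _).star_eq]
  have hsq : a ^ (2 * s + 1) ≤ a ^ s * b ^ (1 / 2 : ℝ) * star (a ^ s * b ^ (1 / 2 : ℝ)) := by
    calc a ^ (2 * s + 1) = a ^ s * a * a ^ s := by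
          rw [← rpow_conjugate_rpow ha, CFC.rpow_one a ha.nonneg]
      _ ≤ a ^ s * b * a ^ s := (isSelfAdjoint_rpow a s).conjugate_le_conjugate hab
      _ = a ^ s * (b ^ (1 / 2 : ℝ) * b ^ (1 / 2 : ℝ)) * a ^ s := by
          rw [rpow_half_mul_rpow_half hb]
      _ = a ^ s * b ^ (1 / 2 : ℝ) * star (a ^ s * b ^ (1 / 2 : ℝ)) := by
          simp only [hstar, mul_assoc]
  have hinv := rpow_neg_le_rpow_neg (ha.rpow a _) hsq (p := 1 / 2) (by norm_num)
  rw [rpow_rpow_of_isStrictlyPositive ha] at hinv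
  calc CFC.abs (a ^ s * b ^ (1 / 2 : ℝ))
      ≤ star (a ^ s * b ^ (1 / 2 : ℝ)) * a ^ ((2 * s + 1) * -(1 / 2)) *
          (a ^ s * b ^ (1 / 2 : ℝ)) := by
        rw [abs_eq_star_mul_rpow_mul hunit]
        exact star_left_conjugate_le_conjugate hinv _
    _ = b ^ (1 / 2 : ℝ) * (a ^ s * a ^ ((2 * s + 1) * -(1 / 2)) * a ^ s) * b ^ (1 / 2 : ℝ) := by
        simp only [hstar, mul_assoc]
    _ = b ^ (1 / 2 : ℝ) * a ^ (s - 1 / 2) * b ^ (1 / 2 : ℝ) := by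
        rw [rpow_conjugate_rpow ha]
        ring_nf
    _ ≤ b ^ (1 / 2 : ℝ) * b ^ (s - 1 / 2) * b ^ (1 / 2 : ℝ) :=
        (isSelfAdjoint_rpow b _).conjugate_le_conjugate
          (CFC.rpow_le_rpow ⟨by linarith [hs.1], by linarith [hs.2]⟩ hab)
    _ = b ^ (s + 1 / 2) := by
        rw [rpow_conjugate_rpow hb]
        ring_nf

theorem abs_rpow_mul_le {a b : 𝒜} (ha : IsStrictlyPositive a) (hab : a ≤ b) {s : ℝ}
    (hs : s ∈ Set.Icc (1 / 2) 1) : CFC.abs (a ^ s * b) ≤ b ^ (1 + s) := by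
  obtain ⟨hs₀, hs₁⟩ := hs
  have hb := ha.of_le hab
  set n := CFC.abs (a ^ s * b ^ (1 / 2 : ℝ)) with hn
  have hnpos : IsStrictlyPositive n :=
    isStrictlyPositive_abs ((ha.rpow a s).isUnit.mul (hb.rpow b _).isUnit)
  -- A second half step, now with the base `n ^ (s + 1 / 2)⁻¹ ≤ b` extracted from the first one.
  have hroot : n ^ (s + 1 / 2)⁻¹ ≤ b := by
    calc n ^ (s + 1 / 2)⁻¹ ≤ (b ^ (s + 1 / 2)) ^ (s + 1 / 2)⁻¹ :=
          CFC.rpow_le_rpow ⟨by positivity, inv_le_one_of_one_le₀ (by linarith)⟩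
            (abs_rpow_mul_rpow_half_le ha hab ⟨hs₀, by linarith⟩)
      _ = b := CFC.rpow_rpow_inv b _ (by linarith)
  calc CFC.abs (a ^ s * b) = CFC.abs (a ^ s * b ^ (1 / 2 : ℝ) * b ^ (1 / 2 : ℝ)) := by
        rw [mul_assoc, rpow_half_mul_rpow_half hb]
    _ = CFC.abs ((n ^ (s + 1 / 2)⁻¹) ^ (s + 1 / 2) * b ^ (1 / 2 : ℝ)) := by
        rw [rpow_rpow_of_isStrictlyPositive hnpos, inv_mul_cancel₀ (by linarith),
          CFC.rpow_one n hnpos.nonneg, hn, abs_abs_mul]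
    _ ≤ b ^ (s + 1 / 2 + 1 / 2) :=
        abs_rpow_mul_rpow_half_le (hnpos.rpow n _) hroot ⟨by linarith, by linarith⟩
    _ = b ^ (1 + s) := by ring_nf

theorem abs_mul_le_rpow_of_mul_self_le {b c : 𝒜} (hb : IsStrictlyPositive b)
    (hc : IsSelfAdjoint c) {s : ℝ} (hcb : c * c ≤ b ^ (2 * s)) :
    CFC.abs (c * b) ≤ b ^ (1 + s) := by
  have hb' := hb.nonneg.isSelfAdjoint
  have hsq : star (c * b) * (c * b) ≤ b ^ (2 * (1 + s)) := by
    calc star (c * b) * (c * b) = b * (c * c) * b := by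
          simp only [star_mul, hb'.star_eq, hc.star_eq, mul_assoc]
      _ ≤ b * b ^ (2 * s) * b := hb'.conjugate_le_conjugate hcb
      _ = b ^ (2 * (1 + s)) := by
          rw [conjugate_rpow hb]
          ring_nf
  have := CFC.sqrt_le_sqrt _ _ hsq
  rwa [sqrt_rpow_of_isStrictlyPositive hb, mul_div_cancel_left₀ _ two_ne_zero] at this

end AbsoluteValue

section PositiveMaps

variable {𝒜 ℬ : Type*} [CStarAlgebra 𝒜] [PartialOrder 𝒜] [StarOrderedRing 𝒜]
  [CStarAlgebra ℬ] [PartialOrder ℬ] [StarOrderedRing ℬ]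

theorem continuousMap_quadratic_nonneg_unitInterval {Ψ : C(I, ℝ) →L[ℝ] ℬ}
    (hΨ : ∀ h, 0 ≤ h → 0 ≤ Ψ h) (f g : C(I, ℝ)) (Z : ℬ) :
    0 ≤ Ψ (f * f) - Ψ (f * g) * Z - star Z * Ψ (f * g) + star Z * Ψ (g * g) * Z := by
  let node (n : ℕ) (k : Fin (n + 1)) : I := bernstein.z k
  have map_approx (n : ℕ) (h : C(I, ℝ)) :
      Ψ (bernsteinApproximation n h) = ∑ k, h (node n k) • Ψ (bernstein n k) := by
    rw [bernsteinApproximation, map_sum]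
    refine Finset.sum_congr rfl fun k _ => ?_
    rw [← map_smul]
    congr 1
    ext x
    simp [node, mul_comm]
  have tendsto_approx (h : C(I, ℝ)) :
      Tendsto (fun n => Ψ (bernsteinApproximation n h)) atTop (𝓝 (Ψ h)) :=
    (Ψ.continuous.tendsto h).comp (bernsteinApproximation_uniform h)
  refine ge_of_tendsto' ((((tendsto_approx _).sub ((tendsto_approx _).mul_const Z)).sub
    ((tendsto_approx _).const_mul (star Z))).add
      (((tendsto_approx _).const_mul (star Z)).mul_const Z)) fun n => ?_
  calc (0 : ℬ)
      ≤ ∑ k, star (f (node n k) • 1 - g (node n k) • Z) * Ψ (bernstein n k) *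
          (f (node n k) • 1 - g (node n k) • Z) :=
        Finset.sum_nonneg fun k _ => star_left_conjugate_nonneg
          (hΨ _ fun _ => bernstein_nonneg) _
    _ = _ := by
        simp only [map_approx, Finset.mul_sum, Finset.sum_mul, ← Finset.sum_add_distrib,
          ← Finset.sum_sub_distrib, ContinuousMap.mul_apply]
        refine Finset.sum_congr rfl fun k _ => ?_
        simp only [star_sub, star_smul, star_one, star_trivial, sub_mul, mul_sub, smul_mul_assoc,
          mul_smul_comm, one_mul, mul_one, smul_smul, smul_sub, mul_comm (g (node n k))]
        abel

theorem continuousMap_quadratic_nonneg {K : Type*} [TopologicalSpace K] [CompactSpace K]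
    {e : K → ℝ} (he : Continuous e) (he' : Function.Injective e) {Ψ : C(K, ℝ) →L[ℝ] ℬ}
    (hΨ : ∀ h, 0 ≤ h → 0 ≤ Ψ h) (f g : C(K, ℝ)) (Z : ℬ) :
    0 ≤ Ψ (f * f) - Ψ (f * g) * Z - star Z * Ψ (f * g) + star Z * Ψ (g * g) * Z := by
  have hι : IsClosedEmbedding (unitInterval.sigmoid ∘ e) :=
    (unitInterval.continuous_sigmoid.comp he).isClosedEmbedding
      (unitInterval.sigmoid_injective.comp he')
  let ι : C(K, I) := ⟨_, hι.continuous⟩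
  obtain ⟨f', rfl⟩ := ContinuousMap.exists_extension hι f
  obtain ⟨g', rfl⟩ := ContinuousMap.exists_extension hι g
  exact continuousMap_quadratic_nonneg_unitInterval
    (Ψ := Ψ ∘L ContinuousMap.compCLM ℝ ℝ ι) (fun h hh => hΨ _ fun x => hh (ι x)) f' g' Z

theorem map_cfc_quadratic_nonneg (Φ : 𝒜 →ₚ[ℂ] ℬ) {a : 𝒜} (ha : IsSelfAdjoint a) {f g : ℝ → ℝ}
    (hf : ContinuousOn f (spectrum ℝ a)) (hg : ContinuousOn g (spectrum ℝ a)) (Z : ℬ) :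
    0 ≤ Φ (cfc (fun x => f x * f x) a) - Φ (cfc (fun x => f x * g x) a) * Z -
      star Z * Φ (cfc (fun x => f x * g x) a) + star Z * Φ (cfc (fun x => g x * g x) a) * Z := by
  let Φ' : 𝒜 →L[ℝ] ℬ := ⟨(Φ : 𝒜 →ₗ[ℂ] ℬ).restrictScalars ℝ, map_continuous Φ⟩
  rw [cfc_apply _ a, cfc_apply _ a, cfc_apply _ a]
  exact continuousMap_quadratic_nonneg continuous_subtype_val Subtype.val_injective
    (Ψ := Φ' ∘L cfcL ha) (fun h hh => Φ.map_nonneg ((cfcHom_nonneg_iff ha).2 hh))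
    ⟨_, hf.domRestrict⟩ ⟨_, hg.domRestrict⟩ Z

variable {Φ : 𝒜 →ₚ[ℂ] ℬ} {a : 𝒜}

theorem map_isStrictlyPositive (hΦ : IsStrictlyPositive (Φ 1))
    (ha : IsStrictlyPositive a) : IsStrictlyPositive (Φ a) := by
  obtain _ | _ := subsingleton_or_nontrivial 𝒜
  · rwa [Subsingleton.elim a 1]
  obtain ⟨r, hr, hra⟩ := (CFC.exists_pos_algebraMap_le_iff ha.nonneg.isSelfAdjoint).2
    fun x hx => ha.spectrum_pos hx
  refine (hΦ.smul hr).of_le ?_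
  simpa only [Algebra.algebraMap_eq_smul_one, PositiveLinearMap.map_smul_of_tower] using
    OrderHomClass.mono Φ hra

theorem map_rpow_mul_rpow_neg_one_mul_map_rpow_le (hΦ : IsStrictlyPositive (Φ 1))
    (ha : IsStrictlyPositive a) (x y : ℝ) :
    Φ (a ^ ((x + y) / 2)) * Φ (a ^ x) ^ (-1 : ℝ) * Φ (a ^ ((x + y) / 2)) ≤ Φ (a ^ y) := by
  have hpos : ∀ r ∈ spectrum ℝ a, 0 < r := fun r hr => ha.spectrum_pos hr
  have hcont (p : ℝ) : ContinuousOn (fun r : ℝ => r ^ p) (spectrum ℝ a) :=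
    continuousOn_id.rpow_const fun r hr => Or.inl (hpos r hr).ne'
  have hmul (p q : ℝ) : cfc (fun r : ℝ => r ^ p * r ^ q) a = a ^ (p + q) := by
    rw [CFC.rpow_eq_cfc_real ha.nonneg]
    exact cfc_congr fun r hr => (Real.rpow_add (hpos r hr) p q).symm
  set q := Φ (a ^ ((x + y) / 2)) with hq
  set m := Φ (a ^ x)
  have hm : IsStrictlyPositive m := map_isStrictlyPositive hΦ (ha.rpow a x)
  have hm_inv : m ^ (-1 : ℝ) * m = 1 := by
    simpa [CFC.rpow_one m hm.nonneg] using CFC.rpow_neg_mul_rpow 1 hm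
  have hq' : IsSelfAdjoint q := (Φ.map_nonneg CFC.rpow_nonneg).isSelfAdjoint
  have key := map_cfc_quadratic_nonneg Φ ha.nonneg.isSelfAdjoint (hcont (y / 2)) (hcont (x / 2))
    (m ^ (-1 : ℝ) * q)
  rw [hmul, hmul, hmul, add_halves, add_halves, ← add_div, add_comm y x, ← hq, star_mul,
    hq'.star_eq, (isSelfAdjoint_rpow m (-1)).star_eq,
    mul_assoc q _ m, hm_inv] at key
  simpa [mul_assoc] using key

theorem map_rpow_le_rpow_map (hΦ : Φ 1 = 1)
    (ha : IsStrictlyPositive a) {x : ℝ} (hx : x ∈ Set.Icc 0 1) : Φ (a ^ x) ≤ Φ a ^ x := by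
  have hΦ1 : IsStrictlyPositive (Φ 1) := hΦ ▸ isStrictlyPositive_one
  have hb := map_isStrictlyPositive hΦ1 ha
  have hclosed : IsClosed {x : ℝ | Φ (a ^ x) ≤ Φ a ^ x} :=
    isClosed_le ((map_continuous Φ).comp (continuous_const_rpow_of_isStrictlyPositive ha))
      (continuous_const_rpow_of_isStrictlyPositive hb)
  refine (ordConnected_of_isClosed_of_midpoint_mem hclosed fun y hy z hz => ?_).out ?_ ?_ hx
  · exact le_rpow_of_mul_rpow_neg_one_mul_le hb (map_isStrictlyPositive hΦ1 (ha.rpow a y))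
      (Φ.map_nonneg CFC.rpow_nonneg) hy
      ((map_rpow_mul_rpow_neg_one_mul_map_rpow_le hΦ1 ha y z).trans hz)
  · simp [CFC.rpow_zero a ha.nonneg, CFC.rpow_zero (Φ a) hb.nonneg, hΦ]
  · simp [CFC.rpow_one a ha.nonneg, CFC.rpow_one (Φ a) hb.nonneg]

theorem rpow_map_le_map_rpow (hΦ : Φ 1 = 1)
    (ha : IsStrictlyPositive a) {x : ℝ} (hx : x ∈ Set.Icc 1 2) : Φ a ^ x ≤ Φ (a ^ x) := by
  have hΦ1 : IsStrictlyPositive (Φ 1) := hΦ ▸ isStrictlyPositive_one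
  have hb := map_isStrictlyPositive hΦ1 ha
  have hjensen : Φ (a ^ (2 - x)) ≤ Φ a ^ (2 - x) :=
    map_rpow_le_rpow_map hΦ ha ⟨by linarith [hx.2], by linarith [hx.1]⟩
  have hinv : Φ a ^ (x - 2) ≤ Φ (a ^ (2 - x)) ^ (-1 : ℝ) := by
    simpa [rpow_rpow_of_isStrictlyPositive hb] using CStarAlgebra.rpow_neg_one_le_rpow_neg_one
      hjensen (map_isStrictlyPositive hΦ1 (ha.rpow a _))
  calc Φ a ^ x = Φ a * Φ a ^ (x - 2) * Φ a := by
        rw [conjugate_rpow hb, add_sub_cancel]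
    _ ≤ Φ a * Φ (a ^ (2 - x)) ^ (-1 : ℝ) * Φ a :=
        hb.nonneg.isSelfAdjoint.conjugate_le_conjugate hinv
    _ ≤ Φ (a ^ x) := by
        have := map_rpow_mul_rpow_neg_one_mul_map_rpow_le hΦ1 ha (2 - x) x
        norm_num [CFC.rpow_one a] at this
        exact this

theorem abs_map_rpow_mul_map_le_of_le_half (hΦ : Φ 1 = 1) (ha : IsStrictlyPositive a) {α : ℝ}
    (hα : α ∈ Set.Icc 0 (1 / 2)) : CFC.abs (Φ (a ^ α) * Φ a) ≤ Φ a ^ (1 + α) := by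
  have hΦ1 : IsStrictlyPositive (Φ 1) := hΦ ▸ isStrictlyPositive_one
  have hc := map_isStrictlyPositive hΦ1 (ha.rpow a α)
  refine abs_mul_le_rpow_of_mul_self_le (map_isStrictlyPositive hΦ1 ha) hc.nonneg.isSelfAdjoint ?_
  calc Φ (a ^ α) * Φ (a ^ α) = Φ (a ^ α) ^ (2 : ℝ) := by
        rw [← one_add_one_eq_two, CFC.rpow_add hc.isUnit, CFC.rpow_one _ hc.nonneg]
    _ ≤ Φ ((a ^ α) ^ (2 : ℝ)) := rpow_map_le_map_rpow hΦ (ha.rpow a α) ⟨one_le_two, le_rfl⟩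
    _ = Φ (a ^ (2 * α)) := by rw [rpow_rpow_of_isStrictlyPositive ha, mul_comm]
    _ ≤ Φ a ^ (2 * α) := map_rpow_le_rpow_map hΦ ha ⟨by linarith [hα.1], by linarith [hα.2]⟩

theorem abs_map_rpow_mul_map_le_of_half_le (hΦ : Φ 1 = 1) (ha : IsStrictlyPositive a) {α : ℝ}
    (hα : α ∈ Set.Icc (1 / 2) 1) : CFC.abs (Φ (a ^ α) * Φ a) ≤ Φ a ^ (1 + α) := by
  have hα₀ : 0 < α := by linarith [hα.1]
  have hc := map_isStrictlyPositive (hΦ ▸ isStrictlyPositive_one) (ha.rpow a α)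
  have hroot : Φ (a ^ α) ^ α⁻¹ ≤ Φ a := by
    have := rpow_map_le_map_rpow hΦ (ha.rpow a α) (x := α⁻¹)
      ⟨(one_le_inv₀ hα₀).2 hα.2, inv_le_of_inv_le₀ two_pos (by simpa using hα.1)⟩
    rwa [rpow_rpow_of_isStrictlyPositive ha, mul_inv_cancel₀ hα₀.ne', CFC.rpow_one a ha.nonneg]
      at this
  have := abs_rpow_mul_le (hc.rpow _ α⁻¹) hroot hα
  rwa [rpow_rpow_of_isStrictlyPositive hc, inv_mul_cancel₀ hα₀.ne', CFC.rpow_one _ hc.nonneg]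
    at this

theorem kadison_strengthened_general (hΦ : Φ 1 = 1) (ha : 0 ≤ a) {α : ℝ}
    (hα : α ∈ Set.Icc 0 1) : CFC.abs (Φ (a ^ α) * Φ a) ≤ Φ a ^ (1 + α) := by
  have hΦcont : Continuous Φ := map_continuous Φ
  have hleft : ContinuousOn (fun b => CFC.abs (Φ (b ^ α) * Φ b)) {b | 0 ≤ b} :=
    CFC.continuous_abs.comp_continuousOn
      ((hΦcont.comp_continuousOn (continuousOn_rpow_of_nonneg hα.1)).mul hΦcont.continuousOn)
  have hright : ContinuousOn (fun b => Φ b ^ (1 + α)) {b | 0 ≤ b} :=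
    (continuousOn_rpow_of_nonneg (by linarith [hα.1])).comp hΦcont.continuousOn
      fun b hb => Φ.map_nonneg hb
  have hsub : {b : 𝒜 | IsStrictlyPositive b} ⊆ {b | 0 ≤ b} := fun b hb => hb.nonneg
  refine ContinuousWithinAt.closure_le (mem_closure_isStrictlyPositive ha)
    ((hleft a ha).mono hsub) ((hright a ha).mono hsub) fun b hb => ?_
  obtain h | h := le_total α (1 / 2)
  · exact abs_map_rpow_mul_map_le_of_le_half hΦ hb ⟨hα.1, h⟩
  · exact abs_map_rpow_mul_map_le_of_half_le hΦ hb ⟨h, hα.2⟩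

end PositiveMaps

section Matrices

open scoped MatrixOrder Matrix.Norms.L2Operator

theorem mpow_eq_rpow {n : ℕ} {A : Matrix (Fin n) (Fin n) ℂ} (hA : 0 ≤ A) (p : ℝ) :
    mpow A p = A ^ p :=
  (CFC.rpow_eq_cfc_real hA).symm

theorem matAbs_eq_abs {n : ℕ} (X : Matrix (Fin n) (Fin n) ℂ) : matAbs X = CFC.abs X := by
  rw [CFC.abs, CFC.sqrt_eq_real_sqrt _ (star_mul_self_nonneg X),
    cfcₙ_eq_cfc (hf0 := Real.sqrt_zero), matAbs, Matrix.star_eq_conjTranspose]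

end Matrices

/-- If `Φ` is a unital positive linear map, `A ≥ 0` and `0 ≤ α ≤ 1`, then
`Φ(A)^{1+α} ≥ |Φ(A^α) Φ(A)|`. -/
theorem kadison_strengthened {n d : ℕ}
    (Φ : Matrix (Fin n) (Fin n) ℂ →ₗ[ℂ] Matrix (Fin d) (Fin d) ℂ)
    (hΦ1 : Φ 1 = 1) (hΦpos : ∀ X : Matrix (Fin n) (Fin n) ℂ, X.PosSemidef → (Φ X).PosSemidef)
    (A : Matrix (Fin n) (Fin n) ℂ) (hA : A.PosSemidef)
    (α : ℝ) (hα0 : 0 ≤ α) (hα1 : α ≤ 1) :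
    loewnerLE (matAbs (Φ (mpow A α) * Φ A)) (mpow (Φ A) (1 + α)) := by
  open scoped MatrixOrder Matrix.Norms.L2Operator in
  have hΦA : 0 ≤ Φ A := (hΦpos A hA).nonneg
  rw [matAbs_eq_abs, mpow_eq_rpow hA.nonneg, mpow_eq_rpow hΦA]
  exact kadison_strengthened_general
    (Φ := .mk₀ Φ fun X hX => (hΦpos X (Matrix.nonneg_iff_posSemidef.1 hX)).nonneg)
    hΦ1 hA.nonneg ⟨hα0, hα1⟩
end

section
/- If Φ : Mₙ(ℂ) → M_d(ℂ) is a unital positive linear map, A is positive semidefinite, and p, q ≥ 0, then there exists a unitary V ∈ M_d(ℂ) with |Φ(A^p)Φ(A^q)| ≤ V Φ(A^{p+q}) V*. -/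
open scoped Matrix ComplexOrder

/-!
With `E i = Φ (P i)` for the spectral projections `P i` of `A`, the matrices `Φ (A ^ t)` are
integrals `∫ a ^ t dE` against a finite positive operator-valued measure of total mass at most `1`.
By passing to adjoints one may assume `q ≤ p`. Put `b = a ^ (p + q)`, `r = p / (p + q)` and
`s = q / (p + q) ≤ 1 / 2` (or `r = s = 1 / 2` if `p + q = 0`), so that `B = Φ (A ^ p) = ∫ b ^ r dE`,
`C = Φ (A ^ q) = ∫ b ^ s dE` and `D = Φ (A ^ (p + q)) = ∫ b dE`.

If `u = B C v` satisfies `⟪D u, u⟫ ≤ μ ‖u‖²`, then Jensen's inequality gives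
`⟪B u, u⟫ ≤ μ ^ r ‖u‖²`, and Kadison's inequality `C² ≤ ∫ b ^ (2 * s) dE` followed by Jensen's gives
`‖C u‖ ≤ μ ^ s ‖u‖`. The Cauchy-Schwarz inequality for the form of `B` then yields
`‖u‖⁴ = ⟪B C v, u⟫² ≤ ⟪B C v, C v⟫ ⟪B u, u⟫ = ⟪v, C u⟫ ⟪B u, u⟫ ≤ μ ‖u‖³ ‖v‖`, that is,
`‖B C v‖ ≤ μ ‖v‖`. Taking for `μ` the `j`-th eigenvalue of `D` and for `v` a vector in the span of
the top `j` right singular vectors of `B C` which `B C` sends into the span of the eigenvectors of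
`D` from the `j`-th on bounds the `j`-th singular value of `B C` by `μ`.
-/

section SingularValues

open Module RCLike
open scoped InnerProductSpace

lemma exists_mem_ne_zero_map_mem {K V W : Type*} [DivisionRing K] [AddCommGroup V] [Module K V]
    [FiniteDimensional K V] [AddCommGroup W] [Module K W] [FiniteDimensional K W] (f : V →ₗ[K] W)
    {S : Submodule K V} {T : Submodule K W} (h : finrank K W < finrank K S + finrank K T) :
    ∃ v ∈ S, v ≠ 0 ∧ f v ∈ T := by
  have hlt : finrank K (W ⧸ T) < finrank K S := by
    have := T.finrank_quotient_add_finrank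
    lia
  obtain ⟨v, hv, hv0⟩ := Submodule.exists_mem_ne_zero_of_ne_bot
    ((T.mkQ ∘ₗ f ∘ₗ S.subtype).ker_ne_bot_of_finrank_lt hlt)
  exact ⟨v, v.2, by simpa using hv0, by simpa using hv⟩

lemma finrank_span_image_eq_card {ι R M : Type*} [Ring R] [StrongRankCondition R]
    [AddCommGroup M] [Module R M] {b : ι → M} (hb : LinearIndependent R b) (s : Finset ι) :
    finrank R (Submodule.span R (b '' s)) = s.card := by
  classical
  have := nontrivial_of_invariantBasisNumber R
  rw [← Finset.coe_image, finrank_span_finset_eq_card,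
    Finset.card_image_of_injective _ hb.injective]
  rw [Finset.coe_image]
  exact (hb.linearIndepOn s).id_image

lemma charpoly_comp_comm {R M : Type*} [CommRing R] [AddCommGroup M] [Module R M] [Module.Free R M]
    [Module.Finite R M] (f g : M →ₗ[R] M) : (f ∘ₗ g).charpoly = (g ∘ₗ f).charpoly := by
  classical
  let b := Module.Free.chooseBasis R M
  rw [← LinearMap.charpoly_toMatrix _ b, ← LinearMap.charpoly_toMatrix _ b,
    LinearMap.toMatrix_comp b b b, LinearMap.toMatrix_comp b b b, Matrix.charpoly_mul_comm]

variable {𝕜 E F : Type*} [RCLike 𝕜]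
  [NormedAddCommGroup E] [InnerProductSpace 𝕜 E] [NormedAddCommGroup F] [InnerProductSpace 𝕜 F]

lemma inner_eq_zero_of_mem_span_image {ι : Type*} {b : ι → E} (hb : Orthonormal 𝕜 b) {s : Set ι}
    {x : E} (hx : x ∈ Submodule.span 𝕜 (b '' s)) {i : ι} (hi : i ∉ s) : ⟪b i, x⟫_𝕜 = 0 := by
  refine Submodule.mem_orthogonal_singleton_iff_inner_right.1
    (Submodule.span_le.2 (Set.image_subset_iff.2 fun k hk => ?_) hx)
  exact Submodule.mem_orthogonal_singleton_iff_inner_right.2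
    (hb.inner_eq_zero fun hik => hi (hik ▸ hk))

variable [FiniteDimensional 𝕜 E] [FiniteDimensional 𝕜 F] {T : E →ₗ[𝕜] E} {n : ℕ}

lemma re_inner_apply_self_eq_sum_eigenvalues (hT : T.IsSymmetric) (hn : finrank 𝕜 E = n) (x : E) :
    re ⟪T x, x⟫_𝕜 = ∑ i, hT.eigenvalues hn i * ‖⟪hT.eigenvectorBasis hn i, x⟫_𝕜‖ ^ 2 := by
  rw [← (hT.eigenvectorBasis hn).sum_inner_mul_inner, map_sum]
  refine Finset.sum_congr rfl fun i _ => ?_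
  rw [hT, hT.apply_eigenvectorBasis, inner_smul_right, mul_assoc, re_ofReal_mul,
    inner_mul_symm_re_eq_norm, norm_mul, norm_inner_symm x, sq]

lemma eigenvalues_mul_norm_sq_le (hT : T.IsSymmetric) (hn : finrank 𝕜 E = n) (j : Fin n) {x : E}
    (hx : x ∈ Submodule.span 𝕜 (hT.eigenvectorBasis hn '' (Finset.Iic j : Set (Fin n)))) :
    hT.eigenvalues hn j * ‖x‖ ^ 2 ≤ re ⟪T x, x⟫_𝕜 := by
  rw [re_inner_apply_self_eq_sum_eigenvalues hT hn,
    ← (hT.eigenvectorBasis hn).sum_sq_norm_inner_right, Finset.mul_sum]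
  refine Finset.sum_le_sum fun i _ => ?_
  by_cases hi : i ≤ j
  · gcongr
    exact hT.eigenvalues_antitone hn hi
  · have hi0 := inner_eq_zero_of_mem_span_image (hT.eigenvectorBasis hn).orthonormal hx
      (by simpa using hi)
    simp [hi0]

lemma re_inner_apply_self_le_eigenvalues_mul_norm_sq (hT : T.IsSymmetric) (hn : finrank 𝕜 E = n)
    (j : Fin n) {x : E}
    (hx : x ∈ Submodule.span 𝕜 (hT.eigenvectorBasis hn '' (Finset.Ici j : Set (Fin n)))) :
    re ⟪T x, x⟫_𝕜 ≤ hT.eigenvalues hn j * ‖x‖ ^ 2 := by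
  rw [re_inner_apply_self_eq_sum_eigenvalues hT hn,
    ← (hT.eigenvectorBasis hn).sum_sq_norm_inner_right, Finset.mul_sum]
  refine Finset.sum_le_sum fun i _ => ?_
  by_cases hi : j ≤ i
  · gcongr
    exact hT.eigenvalues_antitone hn hi
  · have hi0 := inner_eq_zero_of_mem_span_image (hT.eigenvectorBasis hn).orthonormal hx
      (by simpa using hi)
    simp [hi0]

lemma singularValues_le_eigenvalues_of_forall_norm_le {Y : E →ₗ[𝕜] F} {D : F →ₗ[𝕜] F}
    (hD : D.IsPositive) (hn : finrank 𝕜 F = n) (j : Fin n)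
    (h : ∀ v, re ⟪D (Y v), Y v⟫_𝕜 ≤ hD.isSymmetric.eigenvalues hn j * ‖Y v‖ ^ 2 →
      ‖Y v‖ ≤ hD.isSymmetric.eigenvalues hn j * ‖v‖) :
    Y.singularValues j ≤ hD.isSymmetric.eigenvalues hn j := by
  have hμ := hD.nonneg_eigenvalues hn j
  rcases le_or_gt (finrank 𝕜 E) j with hj | hj
  · rwa [Y.singularValues_of_finrank_le hj]
  have hY := Y.isSymmetric_adjoint_comp_self
  let k : Fin (finrank 𝕜 E) := ⟨j, hj⟩
  let S := Submodule.span 𝕜 (hY.eigenvectorBasis rfl '' (Finset.Iic k : Set _))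
  let W := Submodule.span 𝕜 (hD.isSymmetric.eigenvectorBasis hn '' (Finset.Ici j : Set _))
  have hdim : finrank 𝕜 F < finrank 𝕜 S + finrank 𝕜 W := by
    rw [finrank_span_image_eq_card (hY.eigenvectorBasis rfl).orthonormal.linearIndependent,
      finrank_span_image_eq_card (hD.isSymmetric.eigenvectorBasis hn).orthonormal.linearIndependent,
      Fin.card_Iic, Fin.card_Ici]
    lia
  obtain ⟨v, hvS, hv0, hvW⟩ := exists_mem_ne_zero_map_mem Y hdim
  have hlower : (Y.singularValues j * ‖v‖) ^ 2 ≤ ‖Y v‖ ^ 2 := by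
    rw [mul_pow, Y.sq_singularValues_of_lt rfl hj, ← inner_self_eq_norm_sq (𝕜 := 𝕜) (Y v),
      ← Y.adjoint_inner_left]
    exact eigenvalues_mul_norm_sq_le hY rfl _ hvS
  have hupper := h v (re_inner_apply_self_le_eigenvalues_mul_norm_sq hD.isSymmetric hn j hvW)
  exact le_of_mul_le_mul_right ((le_of_sq_le_sq hlower (norm_nonneg _)).trans hupper)
    (norm_pos_iff.2 hv0)

lemma singularValues_adjoint (T : E →ₗ[𝕜] E) : T.adjoint.singularValues = T.singularValues := by
  ext j
  rcases le_or_gt (finrank 𝕜 E) j with hj | hj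
  · rw [LinearMap.singularValues_of_finrank_le _ hj, LinearMap.singularValues_of_finrank_le _ hj]
  rw [LinearMap.singularValues_of_lt _ rfl hj, LinearMap.singularValues_of_lt _ rfl hj]
  have h : T.adjoint.isSymmetric_adjoint_comp_self.eigenvalues rfl =
      T.isSymmetric_adjoint_comp_self.eigenvalues rfl := by
    rw [LinearMap.IsSymmetric.eigenvalues_eq_eigenvalues_iff, T.adjoint_adjoint]
    exact charpoly_comp_comm _ _
  rw [h]

end SingularValues

lemma sum_rpow_mul_le {ι : Type*} [Fintype ι] {b w : ι → ℝ} (hb : ∀ i, 0 ≤ b i)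
    (hw : ∀ i, 0 ≤ w i) {η μ s : ℝ} (hη : 0 ≤ η) (hη1 : η ≤ 1) (hμ : 0 ≤ μ)
    (hs : ∑ i, w i ≤ s) (h : ∑ i, b i * w i ≤ μ * s) :
    ∑ i, b i ^ η * w i ≤ μ ^ η * s := by
  rcases hη.eq_or_lt with rfl | hη0
  · simpa using hs
  have hW : 0 ≤ ∑ i, w i := Finset.sum_nonneg fun i _ => hw i
  have hs0 : 0 ≤ s := hW.trans hs
  have hbw : 0 ≤ ∑ i, b i * w i := Finset.sum_nonneg fun i _ => mul_nonneg (hb i) (hw i)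
  calc ∑ i, b i ^ η * w i
      ≤ (∑ i, w i) ^ (1 - η) * (∑ i, b i * w i) ^ η := by
        have := Real.inner_le_weight_mul_Lp_of_nonneg Finset.univ ((one_le_inv₀ hη0).2 hη1) w
          (fun i => b i ^ η) hw fun i => Real.rpow_nonneg (hb i) η
        simpa only [inv_inv, Real.rpow_rpow_inv (hb _) hη0.ne', mul_comm (w _)] using this
    _ ≤ s ^ (1 - η) * (μ * s) ^ η := by gcongr
    _ = μ ^ η * s := by
        rw [Real.mul_rpow hμ hs0, mul_left_comm, ← Real.rpow_add_of_nonneg hs0 (by linarith) hη,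
          sub_add_cancel, Real.rpow_one]

section POVM

open RCLike
open scoped InnerProductSpace

variable {ι 𝕜 H : Type*} [Fintype ι] [RCLike 𝕜] [NormedAddCommGroup H] [InnerProductSpace 𝕜 H]
  {E : ι → H →ₗ[𝕜] H} {b : ι → ℝ}

lemma sq_re_inner_apply_le_of_isPositive {T : H →ₗ[𝕜] H} (hT : T.IsPositive) (x y : H) :
    re ⟪T x, y⟫_𝕜 ^ 2 ≤ re ⟪T x, x⟫_𝕜 * re ⟪T y, y⟫_𝕜 := by
  have hsymm : re ⟪T y, x⟫_𝕜 = re ⟪T x, y⟫_𝕜 := by rw [hT.isSymmetric, inner_re_symm]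
  have h : discrim (re ⟪T y, y⟫_𝕜) (2 * re ⟪T x, y⟫_𝕜) (re ⟪T x, x⟫_𝕜) ≤ 0 := by
    refine discrim_le_zero fun t => ?_
    have ht := hT.re_inner_nonneg_left (x + (t : 𝕜) • y)
    simp only [map_add, map_smul, inner_add_left, inner_add_right, inner_smul_left,
      inner_smul_right, conj_ofReal, re_ofReal_mul, hsymm] at ht
    linarith
  rw [discrim] at h
  linarith

/-- The integral `∫ f dE` of a real function against a positive operator-valued measure on a finite
set, given by the operators `E i` it assigns to points. Positivity of the `E i` and the bound
`∑ i, E i ≤ 1` on the total mass are hypotheses of the lemmas rather than bundled. -/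
noncomputable def povmIntegral (E : ι → H →ₗ[𝕜] H) (f : ι → ℝ) : H →ₗ[𝕜] H :=
  ∑ i, (f i : 𝕜) • E i

lemma re_inner_povmIntegral_apply (E : ι → H →ₗ[𝕜] H) (f : ι → ℝ) (x y : H) :
    re ⟪povmIntegral E f x, y⟫_𝕜 = ∑ i, f i * re ⟪E i x, y⟫_𝕜 := by
  simp [povmIntegral, LinearMap.sum_apply, sum_inner, inner_smul_left]

lemma isPositive_povmIntegral (hE : ∀ i, (E i).IsPositive) {f : ι → ℝ} (hf : ∀ i, 0 ≤ f i) :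
    (povmIntegral E f).IsPositive :=
  LinearMap.isPositive_sum _ fun i _ => (hE i).smul_of_nonneg (ofReal_nonneg.2 (hf i))

lemma sum_re_inner_apply_self_le (hE1 : ∑ i, E i ≤ 1) (x : H) :
    ∑ i, re ⟪E i x, x⟫_𝕜 ≤ ‖x‖ ^ 2 := by
  have h := ((LinearMap.le_def _ _).1 hE1).re_inner_nonneg_left x
  rw [LinearMap.sub_apply, inner_sub_left, map_sub, LinearMap.sum_apply, sum_inner, map_sum,
    Module.End.one_apply, inner_self_eq_norm_sq] at h
  linarith

lemma norm_sq_povmIntegral_apply_le (hE : ∀ i, (E i).IsPositive) (hE1 : ∑ i, E i ≤ 1)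
    (f : ι → ℝ) (x : H) :
    ‖povmIntegral E f x‖ ^ 2 ≤ re ⟪povmIntegral E (fun i => f i ^ 2) x, x⟫_𝕜 := by
  set y := povmIntegral E f x with hy
  have hexpand (i : ι) : re ⟪E i ((f i : 𝕜) • x - y), (f i : 𝕜) • x - y⟫_𝕜 =
      f i ^ 2 * re ⟪E i x, x⟫_𝕜 - 2 * (f i * re ⟪E i x, y⟫_𝕜) + re ⟪E i y, y⟫_𝕜 := by
    have hsymm : re ⟪E i y, x⟫_𝕜 = re ⟪E i x, y⟫_𝕜 := by rw [(hE i).isSymmetric, inner_re_symm]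
    simp only [map_sub, map_smul, inner_sub_left, inner_sub_right, inner_smul_left,
      inner_smul_right, conj_ofReal, re_ofReal_mul, hsymm]
    ring
  have hvar : 0 ≤ ∑ i, re ⟪E i ((f i : 𝕜) • x - y), (f i : 𝕜) • x - y⟫_𝕜 :=
    Finset.sum_nonneg fun i _ => (hE i).re_inner_nonneg_left _
  have hcross : ∑ i, f i * re ⟪E i x, y⟫_𝕜 = ‖y‖ ^ 2 := by
    rw [← re_inner_povmIntegral_apply, ← hy, inner_self_eq_norm_sq]
  have hmass := sum_re_inner_apply_self_le hE1 y
  simp only [hexpand, Finset.sum_add_distrib, Finset.sum_sub_distrib, ← Finset.mul_sum,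
    hcross] at hvar
  rw [re_inner_povmIntegral_apply]
  linarith

lemma re_inner_povmIntegral_rpow_le (hE : ∀ i, (E i).IsPositive) (hE1 : ∑ i, E i ≤ 1)
    (hb : ∀ i, 0 ≤ b i) {η μ : ℝ} (hη : 0 ≤ η) (hη1 : η ≤ 1) (hμ : 0 ≤ μ) {x : H}
    (hx : re ⟪povmIntegral E b x, x⟫_𝕜 ≤ μ * ‖x‖ ^ 2) :
    re ⟪povmIntegral E (fun i => b i ^ η) x, x⟫_𝕜 ≤ μ ^ η * ‖x‖ ^ 2 := by
  rw [re_inner_povmIntegral_apply] at hx ⊢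
  exact sum_rpow_mul_le hb (fun i => (hE i).re_inner_nonneg_left x) hη hη1 hμ
    (sum_re_inner_apply_self_le hE1 x) hx

lemma norm_povmIntegral_rpow_apply_le (hE : ∀ i, (E i).IsPositive) (hE1 : ∑ i, E i ≤ 1)
    (hb : ∀ i, 0 ≤ b i) {η μ : ℝ} (hη : 0 ≤ η) (hη2 : 2 * η ≤ 1) (hμ : 0 ≤ μ) {x : H}
    (hx : re ⟪povmIntegral E b x, x⟫_𝕜 ≤ μ * ‖x‖ ^ 2) :
    ‖povmIntegral E (fun i => b i ^ η) x‖ ≤ μ ^ η * ‖x‖ := by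
  have hsq {t : ℝ} (ht : 0 ≤ t) : (t ^ η) ^ 2 = t ^ (2 * η) := by
    rw [mul_comm, Real.rpow_mul ht, Real.rpow_two]
  refine le_of_sq_le_sq ?_ (by positivity)
  calc ‖povmIntegral E (fun i => b i ^ η) x‖ ^ 2
      ≤ re ⟪povmIntegral E (fun i => (b i ^ η) ^ 2) x, x⟫_𝕜 :=
        norm_sq_povmIntegral_apply_le hE hE1 _ x
    _ ≤ μ ^ (2 * η) * ‖x‖ ^ 2 := by
        simp only [hsq (hb _)]
        exact re_inner_povmIntegral_rpow_le hE hE1 hb (by positivity) hη2 hμ hx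
    _ = (μ ^ η * ‖x‖) ^ 2 := by rw [mul_pow, hsq hμ]

lemma norm_povmIntegral_rpow_comp_apply_le (hE : ∀ i, (E i).IsPositive) (hE1 : ∑ i, E i ≤ 1)
    (hb : ∀ i, 0 ≤ b i) {r s μ : ℝ} (hs : 0 ≤ s) (hsr : s ≤ r) (hrs : r + s = 1) (hμ : 0 ≤ μ)
    (v : H) {u : H}
    (hu : u = povmIntegral E (fun i => b i ^ r) (povmIntegral E (fun i => b i ^ s) v))
    (h : re ⟪povmIntegral E b u, u⟫_𝕜 ≤ μ * ‖u‖ ^ 2) :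
    ‖u‖ ≤ μ * ‖v‖ := by
  set B := povmIntegral E (fun i => b i ^ r)
  set C := povmIntegral E (fun i => b i ^ s)
  have hB : B.IsPositive := isPositive_povmIntegral hE fun i => Real.rpow_nonneg (hb i) r
  have hC : C.IsPositive := isPositive_povmIntegral hE fun i => Real.rpow_nonneg (hb i) s
  have hBu : re ⟪B u, u⟫_𝕜 ≤ μ ^ r * ‖u‖ ^ 2 :=
    re_inner_povmIntegral_rpow_le hE hE1 hb (by linarith) (by linarith) hμ h
  have hCu : ‖C u‖ ≤ μ ^ s * ‖u‖ :=
    norm_povmIntegral_rpow_apply_le hE hE1 hb hs (by linarith) hμ h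
  have hBCv : re ⟪B (C v), C v⟫_𝕜 ≤ μ ^ s * ‖u‖ * ‖v‖ := by
    rw [← hu, ← hC.isSymmetric]
    exact (re_inner_le_norm _ _).trans (by gcongr)
  rcases (norm_nonneg u).eq_or_lt with hu0 | hu0
  · rw [← hu0]; positivity
  have hpow : ‖u‖ ^ 3 * ‖u‖ ≤ ‖u‖ ^ 3 * (μ * ‖v‖) :=
    calc ‖u‖ ^ 3 * ‖u‖ = re ⟪B (C v), u⟫_𝕜 ^ 2 := by rw [← hu, inner_self_eq_norm_sq]; ring
      _ ≤ re ⟪B (C v), C v⟫_𝕜 * re ⟪B u, u⟫_𝕜 := sq_re_inner_apply_le_of_isPositive hB _ _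
      _ ≤ μ ^ s * ‖u‖ * ‖v‖ * (μ ^ r * ‖u‖ ^ 2) :=
        mul_le_mul hBCv hBu (hB.re_inner_nonneg_left u) (by positivity)
      _ = ‖u‖ ^ 3 * (μ ^ (r + s) * ‖v‖) := by
        rw [Real.rpow_add_of_nonneg hμ (hs.trans hsr) hs]; ring
      _ = ‖u‖ ^ 3 * (μ * ‖v‖) := by rw [hrs, Real.rpow_one]
  exact le_of_mul_le_mul_left hpow (by positivity)

end POVM

lemma exists_add_eq_one_of_le {p q : ℝ} (hq : 0 ≤ q) (hqp : q ≤ p) :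
    ∃ r s : ℝ, 0 ≤ s ∧ s ≤ r ∧ r + s = 1 ∧ (p + q) * r = p ∧ (p + q) * s = q := by
  rcases (add_nonneg (hq.trans hqp) hq).eq_or_lt with h | h
  · exact ⟨1 / 2, 1 / 2, by norm_num, le_rfl, by norm_num, by linarith, by linarith⟩
  · refine ⟨p / (p + q), q / (p + q), by positivity, by gcongr, ?_, ?_, ?_⟩ <;> field_simp

section POVMSingularValues

open Module RCLike
open scoped InnerProductSpace

variable {ι 𝕜 H : Type*} [Fintype ι] [RCLike 𝕜] [NormedAddCommGroup H] [InnerProductSpace 𝕜 H]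
  [FiniteDimensional 𝕜 H] {E : ι → H →ₗ[𝕜] H} {a : ι → ℝ}

lemma singularValues_povmIntegral_rpow_comp_le_of_le (hE : ∀ i, (E i).IsPositive)
    (hE1 : ∑ i, E i ≤ 1) (ha : ∀ i, 0 ≤ a i) {p q : ℝ} (hq : 0 ≤ q) (hqp : q ≤ p)
    (hD : (povmIntegral E (fun i => a i ^ (p + q))).IsSymmetric) {m : ℕ}
    (hm : finrank 𝕜 H = m) (j : Fin m) :
    (povmIntegral E (fun i => a i ^ p) ∘ₗ povmIntegral E (fun i => a i ^ q)).singularValues j ≤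
      hD.eigenvalues hm j := by
  obtain ⟨r, s, hs, hsr, hrs, hr_eq, hs_eq⟩ := exists_add_eq_one_of_le hq hqp
  have hb (i : ι) : 0 ≤ a i ^ (p + q) := Real.rpow_nonneg (ha i) _
  have hDpos := isPositive_povmIntegral hE hb
  refine singularValues_le_eigenvalues_of_forall_norm_le hDpos hm j fun v => ?_
  refine norm_povmIntegral_rpow_comp_apply_le hE hE1 hb hs hsr hrs
    (hDpos.nonneg_eigenvalues hm j) v ?_
  simp only [← Real.rpow_mul (ha _), hr_eq, hs_eq, LinearMap.comp_apply]

lemma singularValues_povmIntegral_rpow_comp_le (hE : ∀ i, (E i).IsPositive)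
    (hE1 : ∑ i, E i ≤ 1) (ha : ∀ i, 0 ≤ a i) {p q : ℝ} (hp : 0 ≤ p) (hq : 0 ≤ q)
    (hD : (povmIntegral E (fun i => a i ^ (p + q))).IsSymmetric) {m : ℕ}
    (hm : finrank 𝕜 H = m) (j : Fin m) :
    (povmIntegral E (fun i => a i ^ p) ∘ₗ povmIntegral E (fun i => a i ^ q)).singularValues j ≤
      hD.eigenvalues hm j := by
  rcases le_total q p with hqp | hpq
  · exact singularValues_povmIntegral_rpow_comp_le_of_le hE hE1 ha hq hqp hD hm j
  · have hadj (t : ℝ) :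
        (povmIntegral E fun i => a i ^ t).adjoint = povmIntegral E fun i => a i ^ t :=
      (isPositive_povmIntegral hE fun i => Real.rpow_nonneg (ha i) t).adjoint_eq
    rw [← singularValues_adjoint, LinearMap.adjoint_comp, hadj, hadj]
    simp only [add_comm p q] at hD ⊢
    exact singularValues_povmIntegral_rpow_comp_le_of_le hE hE1 ha hp hpq hD hm j

end POVMSingularValues

section HermitianMatrix

open RCLike

variable {𝕜 n m : Type*} [RCLike 𝕜] [Fintype n] [DecidableEq n] [Fintype m] [DecidableEq m]

lemma exists_posSemidef_cfc_eq_sum {A : Matrix n n 𝕜} (hA : A.IsHermitian) :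
    ∃ P : n → Matrix n n 𝕜, (∀ i, (P i).PosSemidef) ∧
      ∀ f : ℝ → ℝ, cfc f A = ∑ i, (f (hA.eigenvalues i) : 𝕜) • P i := by
  let U : Matrix n n 𝕜 := hA.eigenvectorUnitary
  refine ⟨fun i => U * Matrix.single i i 1 * Uᴴ, fun i => ?_, fun f => ?_⟩
  · simp only [← Matrix.diagonal_single]
    exact (Matrix.PosSemidef.diagonal (Pi.single_nonneg.2 zero_le_one)).mul_mul_conjTranspose_same U
  · rw [hA.cfc_eq, Matrix.IsHermitian.cfc, Unitary.conjStarAlgAut_apply,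
      ← Matrix.sum_single_eq_diagonal, Matrix.star_eq_conjTranspose, Finset.mul_sum, Finset.sum_mul]
    refine Finset.sum_congr rfl fun i _ => ?_
    rw [← Matrix.smul_mul, ← Matrix.mul_smul, Matrix.smul_single, smul_eq_mul, mul_one]
    rfl

lemma exists_povm_toEuclideanLin_map_cfc {Φ : Matrix n n 𝕜 →ₗ[𝕜] Matrix m m 𝕜}
    (hΦ1 : (1 - Φ 1).PosSemidef) (hΦpos : ∀ X : Matrix n n 𝕜, X.PosSemidef → (Φ X).PosSemidef)
    {A : Matrix n n 𝕜} (hA : A.IsHermitian) :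
    ∃ E : n → EuclideanSpace 𝕜 m →ₗ[𝕜] EuclideanSpace 𝕜 m, (∀ i, (E i).IsPositive) ∧
      ∑ i, E i ≤ 1 ∧ ∀ f : ℝ → ℝ,
        Matrix.toEuclideanLin (Φ (cfc f A)) = povmIntegral E (fun i => f (hA.eigenvalues i)) := by
  obtain ⟨P, hP, hcfc⟩ := exists_posSemidef_cfc_eq_sum hA
  have hint (f : ℝ → ℝ) : Matrix.toEuclideanLin (Φ (cfc f A)) =
      povmIntegral (fun i => Matrix.toEuclideanLin (Φ (P i))) (fun i => f (hA.eigenvalues i)) := by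
    simp only [hcfc, map_sum, map_smul, povmIntegral]
  refine ⟨fun i => Matrix.toEuclideanLin (Φ (P i)),
    fun i => Matrix.isPositive_toEuclideanLin_iff.2 (hΦpos _ (hP i)), ?_, hint⟩
  have hsum : ∑ i, Matrix.toEuclideanLin (Φ (P i)) = Matrix.toEuclideanLin (Φ 1) := by
    rw [← cfc_const_one ℝ A hA.isSelfAdjoint, hint]
    simp only [povmIntegral, ofReal_one, one_smul]
  rw [hsum, LinearMap.le_def, Module.End.one_eq_id, ← Matrix.toLpLin_one, ← map_sub]
  exact Matrix.isPositive_toEuclideanLin_iff.2 hΦ1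

lemma exists_unitary_cfc_le {M N : Matrix n n 𝕜} (hM : M.IsHermitian) (hN : N.IsHermitian)
    {f : ℝ → ℝ} (h : ∀ i, f (hM.eigenvalues i) ≤ hN.eigenvalues i) :
    ∃ V ∈ Matrix.unitaryGroup n 𝕜, (V * N * Vᴴ - cfc f M).PosSemidef := by
  let V : Matrix.unitaryGroup n 𝕜 := hM.eigenvectorUnitary * star hN.eigenvectorUnitary
  refine ⟨V, V.2, ?_⟩
  have hconj : (V : Matrix n n 𝕜) * N * (V : Matrix n n 𝕜)ᴴ =
      Unitary.conjStarAlgAut 𝕜 _ hM.eigenvectorUnitary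
        (Matrix.diagonal (ofReal ∘ hN.eigenvalues)) := by
    rw [← hN.conjStarAlgAut_star_eigenvectorUnitary, ← Unitary.conjStarAlgAut_mul_apply]
    exact (Unitary.conjStarAlgAut_apply _ _).symm
  rw [hconj, hM.cfc_eq, Matrix.IsHermitian.cfc, ← map_sub, Unitary.conjStarAlgAut_apply,
    Matrix.diagonal_sub]
  refine (Matrix.PosSemidef.diagonal fun i => ?_).mul_mul_conjTranspose_same _
  simpa using h i

lemma singularValues_toEuclideanLin (X : Matrix n n 𝕜) (i : Fin (Fintype.card n)) :
    (Matrix.toEuclideanLin X).singularValues i =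
      √((Matrix.isHermitian_conjTranspose_mul_self X).eigenvalues₀ i) := by
  have h : (Matrix.toEuclideanLin X).isSymmetric_adjoint_comp_self.eigenvalues
      finrank_euclideanSpace = (Matrix.isHermitian_conjTranspose_mul_self X).eigenvalues₀ := by
    refine (LinearMap.IsSymmetric.eigenvalues_eq_eigenvalues_iff _ _ _ _).2 ?_
    rw [← Matrix.toEuclideanLin_conjTranspose_eq_adjoint, Matrix.toLpLin_mul_same]
  rw [← h]
  exact LinearMap.singularValues_fin _ finrank_euclideanSpace i

end HermitianMatrix

theorem asymmetric_kadison_unitary_general {n d : ℕ}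
    (Φ : Matrix (Fin n) (Fin n) ℂ →ₗ[ℂ] Matrix (Fin d) (Fin d) ℂ)
    (hΦ1 : loewnerLE (Φ 1) 1)
    (hΦpos : ∀ X : Matrix (Fin n) (Fin n) ℂ, X.PosSemidef → (Φ X).PosSemidef)
    (A : Matrix (Fin n) (Fin n) ℂ) (hA : A.PosSemidef)
    (p q : ℝ) (hp : 0 ≤ p) (hq : 0 ≤ q) :
    ∃ V : Matrix (Fin d) (Fin d) ℂ, V ∈ Matrix.unitaryGroup (Fin d) ℂ ∧
      loewnerLE (matAbs (Φ (mpow A p) * Φ (mpow A q))) (V * Φ (mpow A (p + q)) * Vᴴ) := by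
  obtain ⟨E, hE, hE1, hint⟩ := exists_povm_toEuclideanLin_map_cfc hΦ1 hΦpos hA.isHermitian
  have hpow (t : ℝ) : Matrix.toEuclideanLin (Φ (mpow A t)) =
      povmIntegral E (fun i => hA.isHermitian.eigenvalues i ^ t) := hint (· ^ t)
  have hD : (Matrix.toEuclideanLin (Φ (mpow A (p + q)))).IsPositive := by
    rw [hpow]
    exact isPositive_povmIntegral hE fun i => Real.rpow_nonneg (hA.eigenvalues_nonneg i) _
  refine exists_unitary_cfc_le (Matrix.isHermitian_conjTranspose_mul_self _)
    (Matrix.isPositive_toEuclideanLin_iff.1 hD).isHermitian fun i => ?_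
  have hsingular := singularValues_povmIntegral_rpow_comp_le hE hE1 hA.eigenvalues_nonneg hp hq
    (hpow (p + q) ▸ hD.isSymmetric) finrank_euclideanSpace
  simp only [← hpow, ← Matrix.toLpLin_mul_same, singularValues_toEuclideanLin] at hsingular
  exact hsingular _

/-- For a unital positive linear map `Φ`, `A ≥ 0` and `p, q ≥ 0`, there is a unitary `V` with
`|Φ(A^p) Φ(A^q)| ≤ V Φ(A^{p+q}) V*`. -/
theorem asymmetric_kadison_unitary {n d : ℕ}
    (Φ : Matrix (Fin n) (Fin n) ℂ →ₗ[ℂ] Matrix (Fin d) (Fin d) ℂ)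
    (hΦ1 : Φ 1 = 1) (hΦpos : ∀ X : Matrix (Fin n) (Fin n) ℂ, X.PosSemidef → (Φ X).PosSemidef)
    (A : Matrix (Fin n) (Fin n) ℂ) (hA : A.PosSemidef)
    (p q : ℝ) (hp : 0 ≤ p) (hq : 0 ≤ q) :
    ∃ V : Matrix (Fin d) (Fin d) ℂ, V ∈ Matrix.unitaryGroup (Fin d) ℂ ∧
      loewnerLE (matAbs (Φ (mpow A p) * Φ (mpow A q))) (V * Φ (mpow A (p + q)) * Vᴴ) := by
  refine asymmetric_kadison_unitary_general Φ ?_ hΦpos A hA p q hp hq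
  simpa [loewnerLE, hΦ1] using Matrix.PosSemidef.zero
end

section
/- Let (A,B) be a monotone pair in Mₙ(ℂ) (A = f(C), B = g(C) with f, g nonnegative nondecreasing, C ≥ 0) and let E be a self-adjoint projection. Then for every j, the j-th largest eigenvalue satisfies λ_j[(EAE)(EBE)(EAE)] ≤ λ_j[E A B A E]. -/
open scoped Matrix ComplexOrder

/-- `(A, B)` is a monotone pair: `A = f(C)`, `B = g(C)` for some positive semidefinite `C` and
nonnegative nondecreasing functions `f`, `g` on `[0, ∞)`. -/
def MonotonePair {n : ℕ} (A B : Matrix (Fin n) (Fin n) ℂ) : Prop :=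
  ∃ (C : Matrix (Fin n) (Fin n) ℂ) (f g : ℝ → ℝ), C.PosSemidef ∧
    MonotoneOn f (Set.Ici 0) ∧ MonotoneOn g (Set.Ici 0) ∧
    (∀ x ∈ Set.Ici (0 : ℝ), 0 ≤ f x) ∧ (∀ x ∈ Set.Ici (0 : ℝ), 0 ≤ g x) ∧
    A = cfc f C ∧ B = cfc g C

/-- The eigenvalues of a Hermitian matrix, arranged in decreasing order (junk value otherwise). -/
noncomputable def eigDesc {m : ℕ} (X : Matrix (Fin m) (Fin m) ℂ) : Fin m → ℝ :=
  if hX : X.IsHermitian then fun j => (hX.eigenvalues ∘ Tuple.sort hX.eigenvalues) j.rev else 0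

/-!
Write `K = EAE`. By the min-max principle it suffices to show that `⟪v, KBK v⟫ ≥ μ‖v‖²` with
`μ > 0` forces `⟪e, EABAE e⟫ ≥ μ‖e‖²` for `e = K v`. Cauchy–Schwarz gives `‖e‖² ≤ ‖v‖ ‖A e‖`,
and Chebyshev's sum inequality in a common eigenbasis of `A` and `B`, weighted by the squared
coordinates of `e`, gives `‖A e‖² ⟪e, B e⟫ ≤ ‖e‖² ⟪A e, B (A e)⟫`. Together,
`μ‖e‖⁴ ≤ μ‖v‖² ‖A e‖² ≤ ⟪e, B e⟫ ‖A e‖² ≤ ‖e‖² ⟪A e, B (A e)⟫`.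
-/

theorem sum_mul_weight_mul_sum_mul_weight_le {ι R : Type*} [CommRing R] [LinearOrder R]
    [IsStrictOrderedRing R] {s : Finset ι} {f g w : ι → R} (hfg : MonovaryOn f g s)
    (hw : ∀ i ∈ s, 0 ≤ w i) :
    (∑ i ∈ s, f i * w i) * (∑ i ∈ s, g i * w i) ≤
      (∑ i ∈ s, w i) * ∑ i ∈ s, f i * g i * w i := by
  have hnonneg : 0 ≤ ∑ i ∈ s, ∑ j ∈ s, (f j - f i) * (g j - g i) * (w i * w j) :=
    Finset.sum_nonneg fun i hi => Finset.sum_nonneg fun j hj =>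
      mul_nonneg (monovaryOn_iff_forall_mul_nonneg.mp hfg hi hj) (mul_nonneg (hw i hi) (hw j hj))
  have hexpand (i j : ι) : (f j - f i) * (g j - g i) * (w i * w j) =
      w i * (f j * g j * w j) + f i * g i * w i * w j
        - f i * w i * (g j * w j) - g i * w i * (f j * w j) := by ring
  simp only [hexpand, Finset.sum_add_distrib, Finset.sum_sub_distrib, ← Finset.mul_sum,
    ← Finset.sum_mul] at hnonneg
  linarith

section Eigenbasis

open scoped InnerProductSpace

variable {𝕜 H ι : Type*} [RCLike 𝕜] [NormedAddCommGroup H] [InnerProductSpace 𝕜 H] [Fintype ι]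

lemma inner_apply_of_eigenbasis {c : OrthonormalBasis ι 𝕜 H} {T : H →ₗ[𝕜] H} {t : ι → 𝕜}
    (hT : ∀ k, T (c k) = t k • c k) (v : H) (k : ι) : ⟪c k, T v⟫_𝕜 = t k * ⟪c k, v⟫_𝕜 := by
  conv_lhs => rw [← c.sum_repr' v]
  simp only [map_sum, map_smul, hT, inner_sum, inner_smul_right]
  classical
  simp [c.inner_eq_ite, mul_comm]

variable {c : OrthonormalBasis ι 𝕜 H} {T : H →ₗ[𝕜] H} {t : ι → ℝ}

lemma re_inner_self_apply_of_eigenbasis (hT : ∀ k, T (c k) = (t k : 𝕜) • c k) (v : H) :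
    RCLike.re ⟪v, T v⟫_𝕜 = ∑ k, t k * ‖⟪c k, v⟫_𝕜‖ ^ 2 := by
  rw [← c.sum_inner_mul_inner, map_sum]
  refine Finset.sum_congr rfl fun k _ => ?_
  rw [inner_apply_of_eigenbasis hT, mul_left_comm, RCLike.re_ofReal_mul, ← inner_conj_symm v (c k),
    RCLike.conj_mul, ← RCLike.ofReal_pow, RCLike.ofReal_re]

lemma mul_norm_sq_le_re_inner_self_apply (hT : ∀ k, T (c k) = (t k : 𝕜) • c k) {τ : ℝ} {v : H}
    (hτ : ∀ k, ⟪c k, v⟫_𝕜 ≠ 0 → τ ≤ t k) : τ * ‖v‖ ^ 2 ≤ RCLike.re ⟪v, T v⟫_𝕜 := by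
  rw [re_inner_self_apply_of_eigenbasis hT, ← c.sum_sq_norm_inner_right, Finset.mul_sum]
  refine Finset.sum_le_sum fun k _ => ?_
  by_cases hk : ⟪c k, v⟫_𝕜 = 0
  · simp [hk]
  · exact mul_le_mul_of_nonneg_right (hτ k hk) (by positivity)

lemma re_inner_self_apply_le_mul_norm_sq (hT : ∀ k, T (c k) = (t k : 𝕜) • c k) {τ : ℝ} {v : H}
    (hτ : ∀ k, ⟪c k, v⟫_𝕜 ≠ 0 → t k ≤ τ) : RCLike.re ⟪v, T v⟫_𝕜 ≤ τ * ‖v‖ ^ 2 := by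
  have hneg := mul_norm_sq_le_re_inner_self_apply (T := -T) (t := -t) (τ := -τ) (v := v)
    (fun k => by simp [hT]) (fun k hk => neg_le_neg (hτ k hk))
  simpa using hneg

lemma isSymmetric_of_eigenbasis (hT : ∀ k, T (c k) = (t k : 𝕜) • c k) : T.IsSymmetric := by
  intro v w
  rw [← c.sum_inner_mul_inner, ← c.sum_inner_mul_inner]
  refine Finset.sum_congr rfl fun k _ => ?_
  rw [← inner_conj_symm (T v), inner_apply_of_eigenbasis hT, inner_apply_of_eigenbasis hT, map_mul,
    RCLike.conj_ofReal, inner_conj_symm]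
  ring

lemma norm_sq_apply_mul_re_inner_le {A B : H →ₗ[𝕜] H} {a b : ι → ℝ}
    (hA : ∀ k, A (c k) = (a k : 𝕜) • c k) (hB : ∀ k, B (c k) = (b k : 𝕜) • c k)
    (hab : Monovary (a ^ 2) b) (v : H) :
    ‖A v‖ ^ 2 * RCLike.re ⟪v, B v⟫_𝕜 ≤ ‖v‖ ^ 2 * RCLike.re ⟪A v, B (A v)⟫_𝕜 := by
  have hcoord (k : ι) : ‖⟪c k, A v⟫_𝕜‖ ^ 2 = (a ^ 2) k * ‖⟪c k, v⟫_𝕜‖ ^ 2 := by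
    rw [inner_apply_of_eigenbasis hA, norm_mul, mul_pow, RCLike.norm_ofReal, sq_abs, Pi.pow_apply]
  have hcheb := sum_mul_weight_mul_sum_mul_weight_le (s := Finset.univ)
    (w := fun k => ‖⟪c k, v⟫_𝕜‖ ^ 2) (hab.monovaryOn _) fun k _ => by positivity
  rw [re_inner_self_apply_of_eigenbasis hB, re_inner_self_apply_of_eigenbasis hB,
    ← c.sum_sq_norm_inner_right, ← c.sum_sq_norm_inner_right]
  simpa only [hcoord, mul_assoc, mul_left_comm] using hcheb

end Eigenbasis

section Eigenvalues

open scoped InnerProductSpace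

variable {𝕜 H : Type*} [RCLike 𝕜] [NormedAddCommGroup H] [InnerProductSpace 𝕜 H] {n : ℕ}

lemma exists_ne_zero_inner_eq_zero_and_inner_map_eq_zero (u w : OrthonormalBasis (Fin n) 𝕜 H)
    (K : H →ₗ[𝕜] H) (j : Fin n) :
    ∃ v ≠ 0, (∀ k, j < k → ⟪u k, v⟫_𝕜 = 0) ∧ ∀ k, k < j → ⟪w k, K v⟫_𝕜 = 0 := by
  have := u.toBasis.finiteDimensional_of_finite
  let L : H →ₗ[𝕜] ({k // k ≠ j} → 𝕜) := LinearMap.pi fun k =>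
    if j < k then innerₛₗ 𝕜 (u k) else innerₛₗ 𝕜 (w k) ∘ₗ K
  have hker : LinearMap.ker L ≠ ⊥ := L.ker_ne_bot_of_finrank_lt <| by
    simpa [Module.finrank_eq_card_basis u.toBasis] using j.pos
  obtain ⟨v, hv, hv0⟩ := Submodule.exists_mem_ne_zero_of_ne_bot hker
  refine ⟨v, hv0, fun k hk => ?_, fun k hk => ?_⟩
  · simpa [L, hk] using congrFun hv ⟨k, hk.ne'⟩
  · simpa [L, hk.not_gt] using congrFun hv ⟨k, hk.ne⟩

lemma norm_apply_le_of_isSymmetricProjection {E : H →ₗ[𝕜] H} (hE : E.IsSymmetricProjection)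
    (v : H) : ‖E v‖ ≤ ‖v‖ := by
  obtain ⟨_, hE'⟩ := LinearMap.isSymmetricProjection_iff_eq_coe_starProjection_range.mp hE
  rw [hE']
  exact Submodule.norm_starProjection_apply_le _ v

lemma isSymmetric_comp_comp_self {S T : H →ₗ[𝕜] H} (hS : S.IsSymmetric) (hT : T.IsSymmetric) :
    (S ∘ₗ T ∘ₗ S).IsSymmetric := fun v w => by
  simp only [LinearMap.comp_apply, hS _ _, hT _ _]

lemma norm_sq_compression_apply_le {A E : H →ₗ[𝕜] H} (hA : A.IsSymmetric)
    (hE : E.IsSymmetricProjection) (v : H) :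
    ‖E (A (E v))‖ ^ 2 ≤ ‖v‖ * ‖A (E (A (E v)))‖ := by
  set e := E (A (E v))
  have hEe : E e = e := LinearMap.congr_fun hE.isIdempotentElem _
  calc ‖e‖ ^ 2 = RCLike.re ⟪E (A (E v)), e⟫_𝕜 := (inner_self_eq_norm_sq (𝕜 := 𝕜) e).symm
    _ = RCLike.re ⟪E v, A e⟫_𝕜 := by rw [hE.isSymmetric, hEe, hA]
    _ ≤ ‖E v‖ * ‖A e‖ := re_inner_le_norm _ _
    _ ≤ ‖v‖ * ‖A e‖ := by
      gcongr
      exact norm_apply_le_of_isSymmetricProjection hE v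

lemma mul_norm_sq_compression_apply_le {ι : Type*} [Fintype ι] {A B E : H →ₗ[𝕜] H}
    {c : OrthonormalBasis ι 𝕜 H} {a b : ι → ℝ} (hA : ∀ k, A (c k) = (a k : 𝕜) • c k)
    (hB : ∀ k, B (c k) = (b k : 𝕜) • c k) (hab : Monovary (a ^ 2) b)
    (hE : E.IsSymmetricProjection) {μ : ℝ} (hμ : 0 ≤ μ) {v e : H} (he : E (A (E v)) = e)
    (hv : μ * ‖v‖ ^ 2 ≤ RCLike.re ⟪e, B e⟫_𝕜) :
    μ * ‖e‖ ^ 2 ≤ RCLike.re ⟪A e, B (A e)⟫_𝕜 := by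
  rcases eq_or_ne e 0 with rfl | he0
  · simp
  have hcs : ‖e‖ ^ 2 ≤ ‖v‖ * ‖A e‖ :=
    he ▸ norm_sq_compression_apply_le (isSymmetric_of_eigenbasis hA) hE v
  refine le_of_mul_le_mul_left ?_ (by positivity : 0 < ‖e‖ ^ 2)
  calc ‖e‖ ^ 2 * (μ * ‖e‖ ^ 2) = μ * (‖e‖ ^ 2) ^ 2 := by ring
    _ ≤ μ * (‖v‖ * ‖A e‖) ^ 2 := by gcongr
    _ = ‖A e‖ ^ 2 * (μ * ‖v‖ ^ 2) := by ring
    _ ≤ ‖A e‖ ^ 2 * RCLike.re ⟪e, B e⟫_𝕜 := by gcongr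
    _ ≤ ‖e‖ ^ 2 * RCLike.re ⟪A e, B (A e)⟫_𝕜 := norm_sq_apply_mul_re_inner_le hA hB hab e

variable [FiniteDimensional 𝕜 H]

lemma eigenvalues_le_eigenvalues_of_map {S T : H →ₗ[𝕜] H} (hS : S.IsSymmetric)
    (hT : T.IsSymmetric) (hn : Module.finrank 𝕜 H = n) (j : Fin n) (K : H →ₗ[𝕜] H)
    (hK : ∀ v ≠ 0, hS.eigenvalues hn j * ‖v‖ ^ 2 ≤ RCLike.re ⟪v, S v⟫_𝕜 →
      K v ≠ 0 ∧ hS.eigenvalues hn j * ‖K v‖ ^ 2 ≤ RCLike.re ⟪K v, T (K v)⟫_𝕜) :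
    hS.eigenvalues hn j ≤ hT.eigenvalues hn j := by
  obtain ⟨v, hv, hvS, hvT⟩ := exists_ne_zero_inner_eq_zero_and_inner_map_eq_zero
    (hS.eigenvectorBasis hn) (hT.eigenvectorBasis hn) K j
  obtain ⟨hKv, hlower⟩ := hK v hv <| mul_norm_sq_le_re_inner_self_apply
    (hS.apply_eigenvectorBasis hn) fun k hk =>
      hS.eigenvalues_antitone hn <| not_lt.mp fun hjk => hk (hvS k hjk)
  have hupper : RCLike.re ⟪K v, T (K v)⟫_𝕜 ≤ hT.eigenvalues hn j * ‖K v‖ ^ 2 :=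
    re_inner_self_apply_le_mul_norm_sq (hT.apply_eigenvectorBasis hn) fun k hk =>
      hT.eigenvalues_antitone hn <| not_lt.mp fun hkj => hk (hvT k hkj)
  exact le_of_mul_le_mul_right (hlower.trans hupper) (by positivity)

theorem chebyshev_eigenvalue_compression_general {ι : Type*} [Fintype ι] {A B E : H →ₗ[𝕜] H}
    {c : OrthonormalBasis ι 𝕜 H} {a b : ι → ℝ} (hA : ∀ k, A (c k) = (a k : 𝕜) • c k)
    (hB : ∀ k, B (c k) = (b k : 𝕜) • c k) (hb : 0 ≤ b) (hab : Monovary (a ^ 2) b)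
    (hE : E.IsSymmetricProjection)
    (hX : ((E ∘ₗ A ∘ₗ E) ∘ₗ (E ∘ₗ B ∘ₗ E) ∘ₗ (E ∘ₗ A ∘ₗ E)).IsSymmetric)
    (hY : (E ∘ₗ (A ∘ₗ B ∘ₗ A) ∘ₗ E).IsSymmetric) (hn : Module.finrank 𝕜 H = n) (j : Fin n) :
    hX.eigenvalues hn j ≤ hY.eigenvalues hn j := by
  have hAs := isSymmetric_of_eigenbasis hA
  have hEE (v : H) : E (E v) = E v := LinearMap.congr_fun hE.isIdempotentElem v
  have hX_inner (v : H) :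
      ⟪v, ((E ∘ₗ A ∘ₗ E) ∘ₗ (E ∘ₗ B ∘ₗ E) ∘ₗ (E ∘ₗ A ∘ₗ E)) v⟫_𝕜 =
        ⟪E (A (E v)), B (E (A (E v)))⟫_𝕜 := by
    simp only [LinearMap.comp_apply, hEE, hAs _ _, hE.isSymmetric _ _]
  have hY_inner (v : H) :
      ⟪v, (E ∘ₗ (A ∘ₗ B ∘ₗ A) ∘ₗ E) v⟫_𝕜 = ⟪A (E v), B (A (E v))⟫_𝕜 := by
    simp only [LinearMap.comp_apply, hAs _ _, hE.isSymmetric _ _]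
  have hY_pos : (E ∘ₗ (A ∘ₗ B ∘ₗ A) ∘ₗ E).IsPositive := by
    refine ⟨hY, fun v => ?_⟩
    rw [hY, hY_inner, re_inner_self_apply_of_eigenbasis hB]
    exact Finset.sum_nonneg fun k _ => mul_nonneg (hb k) (by positivity)
  rcases le_or_gt (hX.eigenvalues hn j) 0 with hμ | hμ
  · exact hμ.trans (hY_pos.nonneg_eigenvalues hn j)
  refine eigenvalues_le_eigenvalues_of_map hX hY hn j (E ∘ₗ A ∘ₗ E) fun v hv hvX => ?_
  rw [hX_inner] at hvX
  rw [hY_inner]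
  simp only [LinearMap.comp_apply, hEE]
  refine ⟨fun he => ?_, mul_norm_sq_compression_apply_le hA hB hab hE hμ.le rfl hvX⟩
  rw [he, inner_zero_left, map_zero] at hvX
  exact hvX.not_gt (by positivity)

end Eigenvalues

section Matrix

lemma eigDesc_eq_eigenvalues {n : ℕ} {X : Matrix (Fin n) (Fin n) ℂ}
    {T : EuclideanSpace ℂ (Fin n) →ₗ[ℂ] EuclideanSpace ℂ (Fin n)} (hT : T.IsSymmetric)
    (hXT : X.toEuclideanLin = T) (j : Fin n) :
    eigDesc X j =
      hT.eigenvalues finrank_euclideanSpace (Fin.cast (Fintype.card_fin n).symm j) := by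
  subst hXT
  have hX : X.IsHermitian := Matrix.isSymmetric_toEuclideanLin_iff.mp hT
  let f : Fin n → ℝ := hX.eigenvalues₀ ∘ Fin.cast (Fintype.card_fin n).symm
  let σ : Equiv.Perm (Fin n) :=
    (Fintype.equivOfCardEq (Fintype.card_fin _)).symm.trans (finCongr (Fintype.card_fin n))
  have hf : Monotone (f ∘ Fin.revPerm) := fun i k hik =>
    hX.eigenvalues₀_antitone (Fin.rev_le_rev.mpr hik)
  have hσ : hX.eigenvalues = f ∘ σ := rfl
  have hsort : hX.eigenvalues ∘ Tuple.sort hX.eigenvalues = f ∘ Fin.revPerm := by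
    rw [hσ, Tuple.comp_perm_comp_sort_eq_comp_sort, Tuple.comp_sort_eq_comp_iff_monotone.mpr hf]
  rw [eigDesc, dif_pos hX, hsort]
  simp [f, Matrix.IsHermitian.eigenvalues₀]

lemma toEuclideanLin_cfc_apply_eigenvectorBasis {𝕜 ι : Type*} [RCLike 𝕜] [Fintype ι]
    [DecidableEq ι] {C : Matrix ι ι 𝕜} (hC : C.IsHermitian) (f : ℝ → ℝ) (k : ι) :
    (cfc f C).toEuclideanLin (hC.eigenvectorBasis k) =
      (f (hC.eigenvalues k) : 𝕜) • hC.eigenvectorBasis k := by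
  apply WithLp.ofLp_injective 2
  rw [hC.cfc_eq, Matrix.IsHermitian.cfc, Unitary.conjStarAlgAut_apply, Matrix.ofLp_toLpLin,
    Matrix.toLin'_apply, ← Matrix.mulVec_mulVec, ← Matrix.mulVec_mulVec,
    hC.star_eigenvectorUnitary_mulVec, Matrix.diagonal_mulVec_single,
    ← smul_eq_mul, Pi.single_smul, Matrix.mulVec_smul, hC.eigenvectorUnitary_mulVec]
  rfl

theorem MonotonePair.exists_orthonormalBasis {n : ℕ} {A B : Matrix (Fin n) (Fin n) ℂ}
    (hAB : MonotonePair A B) :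
    ∃ (c : OrthonormalBasis (Fin n) ℂ (EuclideanSpace ℂ (Fin n))) (a b : Fin n → ℝ),
      (∀ k, A.toEuclideanLin (c k) = (a k : ℂ) • c k) ∧
      (∀ k, B.toEuclideanLin (c k) = (b k : ℂ) • c k) ∧ 0 ≤ a ∧ 0 ≤ b ∧ Monovary a b := by
  obtain ⟨C, f, g, hC, hf, hg, hf0, hg0, rfl, rfl⟩ := hAB
  exact ⟨hC.isHermitian.eigenvectorBasis, f ∘ hC.isHermitian.eigenvalues,
    g ∘ hC.isHermitian.eigenvalues,
    toEuclideanLin_cfc_apply_eigenvectorBasis _ f, toEuclideanLin_cfc_apply_eigenvectorBasis _ g,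
    fun k => hf0 _ (hC.eigenvalues_nonneg k), fun k => hg0 _ (hC.eigenvalues_nonneg k),
    fun i k => hf.monovaryOn hg (hC.eigenvalues_nonneg i) (hC.eigenvalues_nonneg k)⟩

end Matrix

/-- Chebyshev-type eigenvalue inequality: for a monotone pair `(A, B)` and a self-adjoint
projection `E`, `λ_j[(EAE)(EBE)(EAE)] ≤ λ_j[EABAE]` for every `j`. -/
theorem chebyshev_eigenvalue_compression {n : ℕ} (A B E : Matrix (Fin n) (Fin n) ℂ)
    (hAB : MonotonePair A B) (hE : Eᴴ = E) (hE2 : E * E = E) (j : Fin n) :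
    eigDesc ((E * A * E) * (E * B * E) * (E * A * E)) j ≤ eigDesc (E * A * B * A * E) j := by
  obtain ⟨c, a, b, hA, hB, ha, hb, hab⟩ := hAB.exists_orthonormalBasis
  have hAs := isSymmetric_of_eigenbasis hA
  have hBs := isSymmetric_of_eigenbasis hB
  have hEs := Matrix.isSymmetric_toEuclideanLin_iff.mpr hE
  have hEp : E.toEuclideanLin.IsSymmetricProjection :=
    ⟨(Matrix.toLpLin_mul_same 2 E E).symm.trans (congrArg _ hE2), hEs⟩
  have hX := isSymmetric_comp_comp_self (isSymmetric_comp_comp_self hEs hAs)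
    (isSymmetric_comp_comp_self hEs hBs)
  have hY := isSymmetric_comp_comp_self hEs (isSymmetric_comp_comp_self hAs hBs)
  rw [eigDesc_eq_eigenvalues hX (by simp only [← Matrix.toLpLin_mul_same, Matrix.mul_assoc]),
    eigDesc_eq_eigenvalues hY (by simp only [← Matrix.toLpLin_mul_same, Matrix.mul_assoc])]
  exact chebyshev_eigenvalue_compression_general hA hB hb (hab.pow_left₀ ha 2) hEp hX hY _ _
end
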